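/- For every integer L ≥ 0, if n = 1 then ∑_{m∈ℤ, m≥0} q^{m²} [L−m choose m]_q = ∑_{j∈ℤ} ( q^{j(10j+1)} [L; 5j]_2 − q^{(4j+2)(5j+2)/2} [L; 5j+2]_2 ); more generally for the Cartan matrix C_n of A_n, ∑_{m∈ℤ^n_{≥0}} q^{(1/2) m·C_n·m} ∏_{j=1}^n [L·δ_{j,1} + m_j − (C_n m)_j choose m_j]_q = ∑_{j∈ℤ} ( q^{j((n+3)(n+4)j+2)/2} [L; (n+4)j]_2 − q^{((n+3)j+2)((n+4)j+2)/2} [L; (n+4)j+2]_2 ). -/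

import Mathlib

open Finset

/-- The variable `q`, realized as the generator of the field of rational functions over `ℚ`. -/
noncomputable def qq : RatFunc ℚ := RatFunc.X

/-- `(x)_n = ∏_{j=1}^n (1 - x^j)`. -/
noncomputable def qPoch (x : RatFunc ℚ) (n : ℕ) : RatFunc ℚ :=
  ∏ j ∈ Finset.range n, (1 - x ^ (j + 1))

/-- Gaussian binomial coefficient `[n choose k]_x`, zero unless `0 ≤ k ≤ n`. -/
noncomputable def qBin (x : RatFunc ℚ) (n k : ℤ) : RatFunc ℚ :=
  if 0 ≤ k ∧ k ≤ n then qPoch x n.toNat / (qPoch x k.toNat * qPoch x (n - k).toNat) else 0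

/-- The `q`-trinomial coefficient `[L, b; a]_2` in base `x`. -/
noncomputable def qTri (x : RatFunc ℚ) (L : ℕ) (b a : ℤ) : RatFunc ℚ :=
  ∑ k ∈ Finset.range (L + 1),
    x ^ ((k : ℤ) * (k + b)) * qBin x (L : ℤ) (k : ℤ) * qBin x ((L : ℤ) - k) ((k : ℤ) + a)

/-- The `q`-trinomial `T_n(L, a)`, written in terms of `s = q^{1/2}` (so the base is `s^2`):
`T_n(L,a) = ∑ s^{r(r-n)} (s²)_L / ((s²)_{(L-a-r)/2} (s²)_{(L+a-r)/2} (s²)_r)`,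
the sum over `r ≥ 0` with `L - a - r` even and `r ≤ L - |a|`; zero for `|a| > L`. -/
noncomputable def qT (s : RatFunc ℚ) (n : ℤ) (L : ℕ) (a : ℤ) : RatFunc ℚ :=
  ∑ r ∈ Finset.range (L + 1),
    if Even ((L : ℤ) - a - r) ∧ (r : ℤ) ≤ (L : ℤ) - |a| then
      s ^ ((r : ℤ) * ((r : ℤ) - n)) * qPoch (s ^ 2) L /
        (qPoch (s ^ 2) (((L : ℤ) - a - r) / 2).toNat *
          qPoch (s ^ 2) (((L : ℤ) + a - r) / 2).toNat * qPoch (s ^ 2) r)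
    else 0

/-- The Cartan matrix of the Lie algebra `A_n`. -/
def cartanA (n : ℕ) (i j : Fin n) : ℤ :=
  if i = j then 2 else if |(i : ℤ) - (j : ℤ)| = 1 then -1 else 0



/-! ### Gaussian binomials -/

/-- Gaussian binomial in base `q = qq ^ 2`. -/
noncomputable def bb (N k : ℤ) : RatFunc ℚ := qBin (qq ^ 2) N k

theorem qq_ne : qq ≠ 0 := RatFunc.X_ne_zero

theorem qq_pow_ne (k : ℕ) : qq ^ (k + 1) ≠ 1 := by
  unfold qq
  rw [← RatFunc.algebraMap_X, ← map_pow, ← map_one (algebraMap (Polynomial ℚ) (RatFunc ℚ))]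
  intro h
  have h2 := RatFunc.algebraMap_injective ℚ h
  have h3 := congrArg Polynomial.natDegree h2
  simp at h3

theorem qPoch_succ (n : ℕ) :
    qPoch (qq ^ 2) (n + 1) = qPoch (qq ^ 2) n * (1 - qq ^ (2 * (n + 1))) := by
  unfold qPoch
  rw [Finset.prod_range_succ, ← pow_mul]

theorem one_sub_ne (n : ℕ) : (1 - qq ^ (2 * (n + 1)) : RatFunc ℚ) ≠ 0 := by
  have := qq_pow_ne (2 * n + 1)
  intro h
  apply this
  rw [show 2 * n + 1 + 1 = 2 * (n + 1) by ring]
  exact (sub_eq_zero.mp h).symm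

theorem qPoch_ne (n : ℕ) : qPoch (qq ^ 2) n ≠ 0 := by
  induction n with
  | zero => simp [qPoch]
  | succ n ih => rw [qPoch_succ]; exact mul_ne_zero ih (one_sub_ne n)

theorem bb_zero {N k : ℤ} (h : k < 0 ∨ N < k) : bb N k = 0 := by
  unfold bb qBin
  rw [if_neg]
  omega

theorem bb_ne {N k : ℤ} (h : bb N k ≠ 0) : 0 ≤ k ∧ k ≤ N := by
  by_contra h2
  exact h (bb_zero (by omega))

theorem bb_nat (i j : ℕ) :
    bb ((i : ℤ) + j) i = qPoch (qq ^ 2) (i + j) / (qPoch (qq ^ 2) i * qPoch (qq ^ 2) j) := by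
  unfold bb qBin
  rw [if_pos (by omega)]
  congr <;> omega

theorem bb_left {N : ℤ} (h : 0 ≤ N) : bb N 0 = 1 := by
  obtain ⟨n, rfl⟩ := Int.eq_ofNat_of_zero_le h
  have := bb_nat 0 n
  simp only [Nat.cast_zero, zero_add] at this
  have h2 := qPoch_ne n
  rw [this]
  simp [qPoch] at h2 ⊢
  exact h2

theorem bb_self {N : ℤ} (h : 0 ≤ N) : bb N N = 1 := by
  obtain ⟨n, rfl⟩ := Int.eq_ofNat_of_zero_le h
  have := bb_nat n 0
  simp only [Nat.cast_zero, add_zero] at this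
  have h2 := qPoch_ne n
  rw [this]
  simp [qPoch] at h2 ⊢
  exact h2

/-- absorption -/
theorem bb_abs (N k : ℤ) :
    (1 - qq ^ (2 * k)) * bb N k = (1 - qq ^ (2 * N)) * bb (N - 1) (k - 1) := by
  rcases lt_or_ge k 1 with h | h
  · rw [bb_zero (N := N - 1) (k := k - 1) (by omega)]
    rcases eq_or_ne k 0 with rfl | h0
    · simp
    · rw [bb_zero (by omega)]; simp
  · rcases lt_or_ge N k with h2 | h2
    · rw [bb_zero (by omega), bb_zero (by omega)]; simp
    · obtain ⟨i, rfl⟩ : ∃ i : ℕ, k = i + 1 := ⟨(k - 1).toNat, by omega⟩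
      obtain ⟨j, rfl⟩ : ∃ j : ℕ, N = i + 1 + j := ⟨(N - (i + 1)).toNat, by omega⟩
      have e1 := bb_nat (i + 1) j
      have e2 := bb_nat i j
      push_cast at e1
      rw [show (i : ℤ) + 1 + j - 1 = i + j by ring, show (i : ℤ) + 1 - 1 = i by ring, e1, e2,
        show i + 1 + j = (i + j) + 1 by ring, qPoch_succ, qPoch_succ]
      have a1 := qPoch_ne i
      have a2 := qPoch_ne j
      have a3 := one_sub_ne i
      have z1 : qq ^ (2 * ((i : ℤ) + 1)) = qq ^ (2 * (i + 1)) := by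
        rw [← zpow_natCast]; push_cast; rfl
      have z2 : qq ^ (2 * ((i : ℤ) + 1 + j)) = qq ^ (2 * (i + j + 1)) := by
        rw [← zpow_natCast]; push_cast; congr 1; ring
      rw [z1, z2]
      field_simp

theorem bb_symm (N k : ℤ) : bb N k = bb N (N - k) := by
  unfold bb qBin
  by_cases h : 0 ≤ k ∧ k ≤ N
  · rw [if_pos h, if_pos (by omega), mul_comm (qPoch _ k.toNat)]
    congr 4
    omega
  · rw [if_neg h, if_neg (by omega)]

theorem zz_add (a b : ℤ) : qq ^ (a + b) = qq ^ a * qq ^ b := zpow_add₀ qq_ne a b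

/-- Pascal -/
theorem bb_pas2 {N k : ℤ} (h : N ≠ 0 ∨ k ≠ 0) :
    bb N k = bb (N - 1) (k - 1) + qq ^ (2 * k) * bb (N - 1) k := by
  rcases lt_or_ge k 1 with h1 | h1
  · rw [bb_zero (N := N - 1) (k := k - 1) (by omega)]
    rcases eq_or_ne k 0 with rfl | h0
    · rcases lt_or_ge N 1 with h2 | h2
      · rw [bb_zero (by omega), bb_zero (by omega)]; simp
      · rw [bb_left (by omega), bb_left (by omega)]; simp
    · rw [bb_zero (by omega), bb_zero (by omega)]; simp
  · rcases le_or_gt N k with h2 | h2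
    · rw [bb_zero (N := N - 1) (k := k) (by omega)]
      rcases eq_or_ne N k with rfl | h0
      · rw [bb_self (by omega), bb_self (by omega)]; simp
      · rw [bb_zero (by omega), bb_zero (by omega)]; simp
    · obtain ⟨i, rfl⟩ : ∃ i : ℕ, k = i + 1 := ⟨(k - 1).toNat, by omega⟩
      obtain ⟨j, rfl⟩ : ∃ j : ℕ, N = i + 1 + (j + 1) := ⟨(N - (i + 2)).toNat, by omega⟩
      have e1 := bb_nat (i + 1) (j + 1)
      have e2 := bb_nat i (j + 1)
      have e3 := bb_nat (i + 1) j
      push_cast at e1 e2 e3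
      rw [show (i : ℤ) + 1 + (j + 1) - 1 = i + (j + 1) by ring, show (i : ℤ) + 1 - 1 = i by ring,
        e1, e2, show (i : ℤ) + (j + 1) = i + 1 + j by ring, e3,
        show i + 1 + (j + 1) = (i + j + 1) + 1 by ring, show i + 1 + j = i + j + 1 by ring,
        show i + (j + 1) = i + j + 1 by ring, qPoch_succ (i + j + 1), qPoch_succ i, qPoch_succ j]
      have a1 := qPoch_ne i
      have a2 := qPoch_ne j
      have a3 := one_sub_ne i
      have a4 := one_sub_ne j
      have z1 : qq ^ (2 * ((i : ℤ) + 1)) = qq ^ (2 * (i + 1)) := by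
        rw [← zpow_natCast]; push_cast; rfl
      rw [z1]
      field_simp
      ring

theorem bb_pas1 {N k : ℤ} (h : N ≠ 0 ∨ k ≠ 0) :
    bb N k = bb (N - 1) k + qq ^ (2 * (N - k)) * bb (N - 1) (k - 1) := by
  have h1 := bb_pas2 (N := N) (k := N - k) (by omega)
  rw [bb_symm N k, h1, bb_symm (N - 1) k, bb_symm (N - 1) (k - 1)]
  rw [show N - 1 - k = N - k - 1 by ring, show N - 1 - (k - 1) = N - k by ring]


/-! ### Sums over the integers -/

theorem fs_of {f : ℤ → RatFunc ℚ} (lo hi : ℤ) (h : ∀ x, f x ≠ 0 → lo ≤ x ∧ x ≤ hi) :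
    Function.HasFiniteSupport f :=
  (Set.finite_Icc lo hi).subset (fun x hx => h x hx)

theorem fs_mul {f : ℤ → RatFunc ℚ} (g : ℤ → RatFunc ℚ) (h : Function.HasFiniteSupport f) :
    Function.HasFiniteSupport (fun x => g x * f x) :=
  Set.Finite.subset h (fun x hx hx2 => hx (by simp [hx2]))

theorem fs_shift {f : ℤ → RatFunc ℚ} (c : ℤ) (h : Function.HasFiniteSupport f) :
    Function.HasFiniteSupport (fun x => f (x - c)) := by
  have h2 : (Function.support f).Finite := h
  have := Set.Finite.preimage (f := fun x : ℤ => x - c) (s := Function.support f)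
    (fun a _ b _ hab => by simpa using hab) h2
  exact this

theorem fs_add {f g : ℤ → RatFunc ℚ} (hf : Function.HasFiniteSupport f)
    (hg : Function.HasFiniteSupport g) : Function.HasFiniteSupport (fun x => f x + g x) := by
  refine Set.Finite.subset (Set.Finite.union hf hg) ?_
  intro x hx
  by_contra h
  simp only [Set.mem_union, Function.mem_support, not_or, not_not] at h
  exact hx (by simp [h.1, h.2])

theorem fsum_shift (f : ℤ → RatFunc ℚ) (c : ℤ) : ∑ᶠ x, f (x - c) = ∑ᶠ x, f x :=
  finsum_comp_equiv (Equiv.subRight c)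

theorem fsum_lin {f g h : ℤ → RatFunc ℚ} (c : RatFunc ℚ) (hg : Function.HasFiniteSupport g)
    (hh : Function.HasFiniteSupport h) (H : ∀ x, f x = g x + c * h x) :
    ∑ᶠ x, f x = ∑ᶠ x, g x + c * ∑ᶠ x, h x := by
  rw [mul_finsum, ← finsum_add_distrib hg (fs_mul (fun _ => c) hh)]
  exact finsum_congr H

theorem fsum_zero {f : ℤ → RatFunc ℚ} (h : ∀ x, f x = 0) : ∑ᶠ x, f x = 0 := by
  rw [finsum_congr h, finsum_zero]

/-! ### Refined q-trinomial coefficients -/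

/-- summand of `EE` -/
noncomputable def ee (M α β L a Y : ℤ) : RatFunc ℚ :=
  qq ^ ((L - 2 * Y + a) ^ 2) * bb M (L - 2 * Y + a) * bb (α + Y - a) α * bb (β + Y) β

/-- generalized refined q-trinomial coefficient -/
noncomputable def EE (M α β L a : ℤ) : RatFunc ℚ := ∑ᶠ Y : ℤ, ee M α β L a Y

theorem ee_ne {M α β L a Y : ℤ} (h : ee M α β L a Y ≠ 0) :
    0 ≤ Y ∧ Y ≤ L ∧ a ≤ Y ∧ 2 * Y ≤ L + a ∧ 0 ≤ M ∧ 0 ≤ α ∧ 0 ≤ β := by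
  unfold ee at h
  have h1 := bb_ne (right_ne_zero_of_mul h)
  have h2 := left_ne_zero_of_mul h
  have h3 := bb_ne (right_ne_zero_of_mul h2)
  have h4 := bb_ne (right_ne_zero_of_mul (left_ne_zero_of_mul h2))
  omega

theorem ee_fs (M α β L a : ℤ) : Function.HasFiniteSupport (ee M α β L a) :=
  fs_of 0 L (fun x hx => by have := ee_ne hx; omega)

theorem EE_zero {M α β L a : ℤ} (h : M < 0 ∨ α < 0 ∨ β < 0 ∨ L < 0 ∨ L < a ∨ L < -a) :
    EE M α β L a = 0 := by
  apply fsum_zero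
  intro Y
  by_contra h2
  have := ee_ne h2
  omega

theorem EE_M {M : ℤ} (hM : 1 ≤ M) (α β L a : ℤ) :
    EE M α β L a = EE (M - 1) α β L a + qq ^ (2 * M - 1) * EE (M - 1) α β (L - 1) a := by
  apply fsum_lin _ (ee_fs _ _ _ _ _) (ee_fs _ _ _ _ _)
  intro Y
  unfold ee
  rw [bb_pas1 (N := M) (by omega)]
  have h1 : qq ^ ((L - 2 * Y + a) ^ 2) * qq ^ (2 * (M - (L - 2 * Y + a)))
      = qq ^ (2 * M - 1) * qq ^ ((L - 1 - 2 * Y + a) ^ 2) := by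
    rw [← zz_add, ← zz_add]; congr 1; ring
  rw [show L - 1 - 2 * Y + a = L - 2 * Y + a - 1 by ring] at *
  linear_combination (bb (M - 1) (L - 2 * Y + a - 1) * bb (α + Y - a) α * bb (β + Y) β) * h1

theorem EE_al {α : ℤ} (hα : 1 ≤ α) (M β L a : ℤ) :
    EE M α β L a = EE M (α - 1) β L a + qq ^ (2 * α) * EE M α β (L - 1) (a + 1) := by
  apply fsum_lin _ (ee_fs _ _ _ _ _) (ee_fs _ _ _ _ _)
  intro Y
  unfold ee
  rw [bb_pas2 (N := α + Y - a) (by omega)]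
  rw [show L - 1 - 2 * Y + (a + 1) = L - 2 * Y + a by ring,
    show α + Y - (a + 1) = α + Y - a - 1 by ring, show α - 1 + Y - a = α + Y - a - 1 by ring]
  ring

theorem EE_be {β a : ℤ} (h : β ≠ 0 ∨ 0 < a) (M α L : ℤ) :
    EE M α β L a = EE M α (β - 1) L a + qq ^ (2 * β) * EE M α β (L - 1) (a - 1) := by
  unfold EE
  rw [← fsum_shift (ee M α β (L - 1) (a - 1)) 1]
  apply fsum_lin _ (ee_fs _ _ _ _ _) (fs_shift _ (ee_fs _ _ _ _ _))
  intro Y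
  unfold ee
  rw [show L - 1 - 2 * (Y - 1) + (a - 1) = L - 2 * Y + a by ring,
    show α + (Y - 1) - (a - 1) = α + Y - a by ring]
  by_cases h0 : β = 0 ∧ Y = 0
  · rw [bb_zero (N := α + Y - a) (by omega)]; simp
  · rw [bb_pas2 (N := β + Y) (by omega),
      show β + (Y - 1) = β + Y - 1 by ring, show β - 1 + Y = β + Y - 1 by ring]
    ring

/-- refined q-trinomial coefficient -/
noncomputable def TT (L M a b : ℤ) : RatFunc ℚ := EE M (M + b) (M - b) L a

theorem TT_zero {L M a b : ℤ} (h : M < 0 ∨ M < b ∨ M < -b ∨ L < 0 ∨ L < a ∨ L < -a) :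
    TT L M a b = 0 := EE_zero (by omega)

theorem TT_neg (L M a b : ℤ) : TT L M (-a) (-b) = TT L M a b := by
  unfold TT EE
  rw [← fsum_shift (ee M (M + -b) (M - -b) L (-a)) a]
  apply finsum_congr
  intro Y
  unfold ee
  rw [show L - 2 * (Y - a) + -a = L - 2 * Y + a by ring,
    show M + -b + (Y - a) - -a = M - b + Y by ring, show M - -b + (Y - a) = M + b + Y - a by ring,
    show M + -b = M - b by ring, show M - -b = M + b by ring]
  ring

theorem TT_B {b : ℤ} (hb : 1 ≤ b) (L i a : ℤ) :
    TT L i a b - (1 + qq ^ 2) * qq ^ (2 * (i + b) - 2) * TT (L - 1) i (a + 1) b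
      + qq ^ (4 * (i + b) - 2) * TT (L - 2) i (a + 2) b
    = TT L (i - 1) a (b - 1) + qq ^ (2 * i - 1) * TT (L - 1) (i - 1) a (b - 1) := by
  rcases lt_or_ge i b with h | h
  · rw [TT_zero, TT_zero, TT_zero, TT_zero, TT_zero] <;> first | omega | simp
  · unfold TT
    rw [show i - 1 + (b - 1) = i + b - 1 - 1 by ring, show i - 1 - (b - 1) = i - b by ring]
    have h1 := EE_al (α := i + b) (by omega) i (i - b) L a
    have h2 := EE_al (α := i + b) (by omega) i (i - b) (L - 1) (a + 1)
    have h3 := EE_al (α := i + b - 1) (by omega) i (i - b) L a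
    have h4 := EE_M (M := i) (by omega) (i + b - 1 - 1) (i - b) L a
    rw [show L - 1 - 1 = L - 2 by ring, show a + 1 + 1 = a + 2 by ring] at h2
    have z1 : qq ^ (2 * (i + b) - 2) = qq ^ (2 * (i + b)) / qq ^ 2 := by
      rw [zpow_sub₀ qq_ne]; rfl
    have z2 : qq ^ (4 * (i + b) - 2) = qq ^ (2 * (i + b)) * qq ^ (2 * (i + b)) / qq ^ 2 := by
      rw [zpow_sub₀ qq_ne, ← zz_add, show 4 * (i + b) = 2 * (i + b) + 2 * (i + b) by ring]; rfl
    have z3 : qq ^ (2 * (i + b - 1)) = qq ^ (2 * (i + b)) / qq ^ 2 := by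
      rw [← z1]; congr 1; ring
    rw [z3] at h3
    rw [z1, z2]
    have := qq_ne
    linear_combination h1 - (qq ^ (2 * (i + b)) / qq ^ 2) * h2 + h3 + h4 -
      (qq ^ (2 * (i + b)) * EE i (i + b) (i - b) (L - 1) (a + 1)) * (div_self (pow_ne_zero 2 this))

theorem TT_A0 (L a : ℤ) (hL : 1 ≤ L) :
    TT L 0 a 0 - TT (L - 1) 0 (a + 1) 0 - TT (L - 1) 0 (a - 1) 0 + TT (L - 2) 0 a 0 = 0 := by
  have key : ∀ L a : ℤ, TT L 0 a 0 - TT (L - 1) 0 (a + 1) 0 = if L = a ∧ 0 ≤ a then 1 else 0 := by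
    intro L a
    unfold TT EE
    rw [← finsum_sub_distrib (ee_fs _ _ _ _ _) (ee_fs _ _ _ _ _), finsum_eq_single _ a]
    · unfold ee
      rw [show L - 1 - 2 * a + (a + 1) = L - 2 * a + a by ring]
      rw [bb_zero (N := 0 + 0 + a - (a + 1)) (by omega)]
      split_ifs with h
      · rw [h.1, show a - 2 * a + a = 0 by ring, add_zero, sub_zero, bb_left (by omega),
          bb_left (by omega), bb_left (by omega)]
        simp
      · by_cases h1 : L = a
        · rw [bb_zero (N := 0 - 0 + a) (by omega)]; simp
        · rw [bb_zero (N := 0) (k := L - 2 * a + a) (by omega)]; simp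
    · intro Y hY
      unfold ee
      rw [show L - 1 - 2 * Y + (a + 1) = L - 2 * Y + a by ring]
      rcases lt_or_gt_of_ne hY with h | h
      · rw [bb_zero (N := 0 + 0 + Y - (a + 1)) (by omega), bb_zero (N := 0 + 0 + Y - a) (by omega)]
        simp
      · rw [add_zero, bb_left (N := 0 + Y - (a + 1)) (by omega), bb_left (N := 0 + Y - a) (by omega)]
        simp
  have h1 := key L a
  have h2 := key (L - 1) (a - 1)
  rw [show L - 1 - 1 = L - 2 by ring, show a - 1 + 1 = a by ring] at h2
  have h3 : (if L = a ∧ 0 ≤ a then 1 else 0 : RatFunc ℚ)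
      = if L - 1 = a - 1 ∧ 0 ≤ a - 1 then 1 else 0 := by
    congr 1
    apply propext
    omega
  linear_combination h1 - h2 + h3

theorem TT_A (L i a : ℤ) (h : i ≠ 0 ∨ 1 ≤ L) :
    TT L i a 0 - qq ^ (2 * i) * (TT (L - 1) i (a + 1) 0 + TT (L - 1) i (a - 1) 0)
      + qq ^ (4 * i) * TT (L - 2) i a 0
    = TT L (i - 1) a 0 + qq ^ (2 * i - 1) * TT (L - 1) (i - 1) a 0 := by
  rcases lt_trichotomy i 0 with h1 | h1 | h1
  · rw [TT_zero, TT_zero, TT_zero, TT_zero, TT_zero, TT_zero] <;> first | omega | simp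
  · subst h1
    have := TT_A0 L a (by omega)
    rw [TT_zero (M := 0 - 1) (by omega), TT_zero (M := 0 - 1) (by omega)]
    simp only [mul_zero, zpow_zero]
    linear_combination this
  · unfold TT
    rw [add_zero, sub_zero, add_zero, sub_zero]
    have h1 := EE_al (α := i) (by omega) i i L a
    have h2 := EE_be (β := i) (a := a) (by omega) i (i - 1) L
    have h3 := EE_al (α := i) (by omega) i i (L - 1) (a - 1)
    have h4 := EE_M (M := i) (by omega) (i - 1) (i - 1) L a
    rw [show L - 1 - 1 = L - 2 by ring, show a - 1 + 1 = a by ring] at h3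
    have z2 : qq ^ (4 * i) = qq ^ (2 * i) * qq ^ (2 * i) := by
      rw [← zz_add]; congr 1; ring
    rw [z2]
    linear_combination h1 + h2 - qq ^ (2 * i) * h3 + h4


/-! ### The invariance -/

/-- weighted sum -/
noncomputable def W (L M : ℤ) (ψ : ℤ → RatFunc ℚ) : RatFunc ℚ := ∑ᶠ i : ℤ, ψ i * bb (L + M - i) L

theorem fs_mulr {f : ℤ → RatFunc ℚ} (g : ℤ → RatFunc ℚ) (h : Function.HasFiniteSupport f) :
    Function.HasFiniteSupport (fun x => f x * g x) :=
  Set.Finite.subset h (fun x hx hx2 => hx (by simp [hx2]))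

theorem W_add (L M : ℤ) {f g : ℤ → RatFunc ℚ} (hf : Function.HasFiniteSupport f)
    (hg : Function.HasFiniteSupport g) :
    W L M (fun i => f i + g i) = W L M f + W L M g := by
  unfold W
  rw [← finsum_add_distrib (fs_mulr _ hf) (fs_mulr _ hg)]
  exact finsum_congr (fun i => by ring)

theorem W_smul (L M : ℤ) (c : RatFunc ℚ) (f : ℤ → RatFunc ℚ) :
    W L M (fun i => c * f i) = c * W L M f := by
  unfold W
  rw [mul_finsum]
  exact finsum_congr (fun i => by ring)

theorem W_zero (L M : ℤ) {f : ℤ → RatFunc ℚ} (h : ∀ i, f i = 0) : W L M f = 0 := by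
  unfold W
  exact fsum_zero (fun i => by rw [h, zero_mul])

theorem W_neg {L : ℤ} (hL : L < 0) (M : ℤ) (f : ℤ → RatFunc ℚ) : W L M f = 0 := by
  unfold W
  exact fsum_zero (fun i => by rw [bb_zero (by omega), mul_zero])

theorem W_shift (L M : ℤ) (f : ℤ → RatFunc ℚ) :
    W L M (fun i => f (i - 1)) = W L (M - 1) f := by
  unfold W
  rw [← fsum_shift (fun i => f i * bb (L + (M - 1) - i) L) 1]
  exact finsum_congr (fun i => by rw [show L + (M - 1) - (i - 1) = L + M - i by ring])

theorem W_diff {L : ℤ} (hL : 1 ≤ L) (M : ℤ) {f : ℤ → RatFunc ℚ}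
    (hf : Function.HasFiniteSupport f) :
    W L M (fun i => qq ^ (2 * i) * f i) =
      W L (M - 1) (fun i => qq ^ (2 * i) * f i) + qq ^ (2 * M) * W (L - 1) M f := by
  unfold W
  apply fsum_lin _ (fs_mulr _ (fs_mul _ hf)) (fs_mulr _ hf)
  intro i
  rw [bb_pas1 (N := L + M - i) (by omega), show L + (M - 1) - i = L + M - i - 1 by ring,
    show L - 1 + M - i = L + M - i - 1 by ring]
  have z : qq ^ (2 * i) * qq ^ (2 * (L + M - i - L)) = qq ^ (2 * M) := by
    rw [← zz_add]; congr 1; ring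
  linear_combination (f i * bb (L + M - i - 1) (L - 1)) * z

theorem W_core {L : ℤ} (hL : 1 ≤ L) (M : ℤ) (c1 c2 : RatFunc ℚ) {f0 f1 f2 f3 f4 : ℤ → RatFunc ℚ}
    (h1 : Function.HasFiniteSupport f1)
    (h2 : Function.HasFiniteSupport f2) (h3 : Function.HasFiniteSupport f3)
    (h4 : Function.HasFiniteSupport f4)
    (e : L = 1 → (∀ i, f2 i = 0) ∧ ∀ i, f4 i = 0)
    (H : ∀ i, f0 i = c1 * (qq ^ (2 * i) * f1 i) + (-c2) * (qq ^ (2 * i) * (qq ^ (2 * i) * f2 i)) +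
      qq * (qq ^ (2 * (i - 1)) * f3 (i - 1)) +
      qq ^ 2 * (qq ^ (2 * (i - 1)) * (qq ^ (2 * (i - 1)) * f4 (i - 1)))) :
    qq ^ (-2 * M) * (W L M f0 - W L (M - 1) f0)
      - qq ^ (2 - 2 * M) * (W L (M - 1) f0 - W L (M - 2) f0)
    = c1 * (W (L - 1) M f1 - W (L - 1) (M - 1) f1) - c2 * qq ^ (2 * M) * W (L - 2) M f2
      + qq⁻¹ * (W (L - 1) (M - 1) f3 - W (L - 1) (M - 2) f3)
      + qq ^ (2 * M - 2) * W (L - 2) (M - 1) f4 := by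
  have hq := qq_ne
  have k1 : ∀ M, W L M f0 = c1 * W L M (fun i => qq ^ (2 * i) * f1 i)
      + (-c2) * W L M (fun i => qq ^ (2 * i) * (qq ^ (2 * i) * f2 i))
      + qq * W L (M - 1) (fun i => qq ^ (2 * i) * f3 i)
      + qq ^ 2 * W L (M - 1) (fun i => qq ^ (2 * i) * (qq ^ (2 * i) * f4 i)) := by
    intro M
    rw [← W_shift L M, ← W_shift L M, ← W_smul, ← W_smul, ← W_smul, ← W_smul, ← W_add, ← W_add,
      ← W_add]
    · congr 1
      funext i
      exact H i
    all_goals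
      repeat' first
        | apply fs_add
        | exact fs_mul (fun _ => _) (fs_mul _ h1)
        | exact fs_mul (fun _ => _) (fs_mul _ (fs_mul _ h2))
        | exact fs_mul (fun _ => _) (fs_mul _ (fs_shift 1 h3))
        | exact fs_mul (fun _ => _) (fs_mul _ (fs_mul _ (fs_shift 1 h4)))
  have k2 : ∀ M, W L M f0 = W L (M - 1) f0 + c1 * (qq ^ (2 * M) * W (L - 1) M f1)
      + (-c2) * (qq ^ (2 * M) * W (L - 1) M (fun i => qq ^ (2 * i) * f2 i))
      + qq * (qq ^ (2 * (M - 1)) * W (L - 1) (M - 1) f3)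
      + qq ^ 2 * (qq ^ (2 * (M - 1)) * W (L - 1) (M - 1) (fun i => qq ^ (2 * i) * f4 i)) := by
    intro M
    rw [k1 M, k1 (M - 1), W_diff hL M h1, W_diff hL M (fs_mul _ h2), W_diff hL (M - 1) h3,
      W_diff hL (M - 1) (fs_mul _ h4)]
    ring
  have k3 : ∀ M, W (L - 1) M (fun i => qq ^ (2 * i) * f2 i) =
      W (L - 1) (M - 1) (fun i => qq ^ (2 * i) * f2 i) + qq ^ (2 * M) * W (L - 2) M f2 := by
    intro M
    by_cases h : L = 1
    · have := (e h).1
      rw [W_zero _ _ this, W_zero _ _ (fun i => by rw [this, mul_zero]),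
        W_zero _ _ (fun i => by rw [this, mul_zero])]
      simp
    · rw [W_diff (by omega) M h2, show L - 1 - 1 = L - 2 by ring]
  have k4 : ∀ M, W (L - 1) M (fun i => qq ^ (2 * i) * f4 i) =
      W (L - 1) (M - 1) (fun i => qq ^ (2 * i) * f4 i) + qq ^ (2 * M) * W (L - 2) M f4 := by
    intro M
    by_cases h : L = 1
    · have := (e h).2
      rw [W_zero _ _ this, W_zero _ _ (fun i => by rw [this, mul_zero]),
        W_zero _ _ (fun i => by rw [this, mul_zero])]
      simp
    · rw [W_diff (by omega) M h4, show L - 1 - 1 = L - 2 by ring]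
  have a1 := k2 M
  have a2 := k2 (M - 1)
  rw [show M - 1 - 1 = M - 2 by ring] at a2
  have a3 := k3 M
  have a4 := k4 (M - 1)
  rw [show M - 1 - 1 = M - 2 by ring] at a4
  have z0 : qq ^ (2 * M) ≠ 0 := zpow_ne_zero _ hq
  have z1 : qq ^ (-2 * M) = (qq ^ (2 * M))⁻¹ := by
    rw [← zpow_neg]; congr 1; ring
  have z2 : qq ^ (2 - 2 * M) = qq ^ 2 * (qq ^ (2 * M))⁻¹ := by
    rw [zpow_sub₀ hq, div_eq_mul_inv]; rfl
  have z3 : qq ^ (2 * (M - 1)) = qq ^ (2 * M) / qq ^ 2 := by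
    rw [mul_sub, zpow_sub₀ hq]; rfl
  have z4 : qq ^ (2 * (M - 1 - 1)) = qq ^ (2 * M) / qq ^ 2 / qq ^ 2 := by
    rw [← z3, mul_sub, zpow_sub₀ hq]; rfl
  have z5 : qq ^ (2 * M - 2) = qq ^ (2 * M) / qq ^ 2 := by
    rw [zpow_sub₀ hq]; rfl
  rw [show M - 2 = M - 1 - 1 by ring] at *
  rw [z3] at a1 a2 a4
  rw [z4] at a2
  rw [z1, z2, z5]
  generalize qq ^ (2 * M) = μ at *
  rw [a1, a2, a3, a4]
  field_simp
  ring


theorem DB_top {b A : ℤ} (hb : 1 ≤ b) (hA : 0 < A) (L : ℤ) :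
    TT L b A b - (1 + qq ^ 2) * qq ^ (4 * b - 2) * TT (L - 1) b (A + 1) b
      + qq ^ (8 * b - 2) * TT (L - 2) b (A + 2) b
    = TT (L - 1) (b - 1) (A - 1) (b - 1) + qq ^ (2 * b - 1) * TT (L - 2) (b - 1) (A - 1) (b - 1) := by
  have h := TT_B hb L b A
  rw [show 2 * (b + b) - 2 = 4 * b - 2 by ring, show 4 * (b + b) - 2 = 8 * b - 2 by ring] at h
  rw [h]
  have k : ∀ L, TT L (b - 1) A (b - 1) = TT (L - 1) (b - 1) (A - 1) (b - 1) := by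
    intro L
    unfold TT
    rw [show b - 1 - (b - 1) = 0 by ring, EE_be (β := 0) (a := A) (by omega),
      EE_zero (β := 0 - 1) (by omega)]
    simp
  rw [k, k, show L - 1 - 1 = L - 2 by ring]

theorem DB_big {b A M : ℤ} (hb : 1 ≤ b) (hA : 0 < A) (hM : b < M) (L : ℤ) :
    qq ^ (-2 * M) * (TT L M A b - TT L (M - 1) A b)
      - qq ^ (2 - 2 * M) * (TT L (M - 1) A b - TT L (M - 2) A b)
    = (1 + qq ^ 2) * qq ^ (2 * b - 2) * (TT (L - 1) M (A + 1) b - TT (L - 1) (M - 1) (A + 1) b)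
      - qq ^ (4 * b - 2) * qq ^ (2 * M) * TT (L - 2) M (A + 2) b
      + qq⁻¹ * (qq ^ (1 - 2 * b) * (TT (L - 1) (M - 1) (A - 1) (b - 1)
        - TT (L - 1) (M - 2) (A - 1) (b - 1)))
      + qq ^ (2 * M - 2) * (qq ^ (1 - 2 * b) * TT (L - 2) (M - 1) (A - 1) (b - 1)) := by
  have hq := qq_ne
  obtain ⟨α, hα⟩ : ∃ α, α = M + b := ⟨_, rfl⟩
  obtain ⟨β, hβ⟩ : ∃ β, β = M - b := ⟨_, rfl⟩
  obtain ⟨μ, hμ⟩ : ∃ μ, μ = qq ^ (2 * M) := ⟨_, rfl⟩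
  obtain ⟨ν, hν⟩ : ∃ ν, ν = qq ^ (2 * b) := ⟨_, rfl⟩
  have hμ0 : μ ≠ 0 := by rw [hμ]; exact zpow_ne_zero _ hq
  have hν0 : ν ≠ 0 := by rw [hν]; exact zpow_ne_zero _ hq
  have z1 : qq ^ (-2 * M) = μ⁻¹ := by rw [hμ, ← zpow_neg]; congr 1; ring
  have z2 : qq ^ (2 - 2 * M) = qq ^ 2 / μ := by rw [hμ, zpow_sub₀ hq]; rfl
  have z3 : qq ^ (2 * b - 2) = ν / qq ^ 2 := by rw [hν, zpow_sub₀ hq]; rfl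
  have z4 : qq ^ (4 * b - 2) = ν * ν / qq ^ 2 := by
    rw [hν, ← zz_add, zpow_sub₀ hq, show 4 * b = 2 * b + 2 * b by ring]; rfl
  have z5 : qq ^ (1 - 2 * b) = qq / ν := by rw [hν, zpow_sub₀ hq, zpow_one]
  have z6 : qq ^ (2 * M - 2) = μ / qq ^ 2 := by rw [hμ, zpow_sub₀ hq]; rfl
  have z7 : qq ^ (2 * M - 1) = μ / qq := by rw [hμ, zpow_sub₀ hq, zpow_one]
  have z8 : qq ^ (2 * (M - 1) - 1) = μ / qq ^ 3 := by
    rw [hμ, show 2 * (M - 1) - 1 = 2 * M - 3 by ring, zpow_sub₀ hq]; rfl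
  have z9 : qq ^ (2 * α) = μ * ν := by rw [hμ, hν, ← zz_add, hα]; congr 1; ring
  have z10 : qq ^ (2 * (α - 1)) = μ * ν / qq ^ 2 := by rw [← z9, mul_sub, zpow_sub₀ hq]; rfl
  have z11 : qq ^ (2 * (α - 2)) = μ * ν / qq ^ 4 := by rw [← z9, mul_sub, zpow_sub₀ hq]; rfl
  have z12 : qq ^ (2 * β) = μ / ν := by
    rw [hμ, hν, hβ, ← zpow_sub₀ hq]; congr 1; ring
  have z13 : qq ^ (2 * (β - 1)) = μ / ν / qq ^ 2 := by rw [← z12, mul_sub, zpow_sub₀ hq]; rfl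
  have sl : ∀ l : ℤ, L - l - 1 = L - (l + 1) := fun l => by ring
  have sa : ∀ c : ℤ, A + c + 1 = A + (c + 1) := fun l => by ring
  have sb : ∀ c : ℤ, A + c - 1 = A + (c - 1) := fun l => by ring
  have r1 : ∀ α β l c : ℤ, EE M α β (L - l) (A + c) = EE (M - 1) α β (L - l) (A + c)
      + μ / qq * EE (M - 1) α β (L - (l + 1)) (A + c) := by
    intro α β l c
    rw [EE_M (by omega), z7, sl]
  have r2 : ∀ α β l c : ℤ, EE (M - 1) α β (L - l) (A + c) = EE (M - 2) α β (L - l) (A + c)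
      + μ / qq ^ 3 * EE (M - 2) α β (L - (l + 1)) (A + c) := by
    intro α β l c
    rw [EE_M (by omega), z8, sl, show M - 1 - 1 = M - 2 by ring]
  have r3 : ∀ α l c : ℤ, EE (M - 2) α (β - 1) (L - l) (A + c) = EE (M - 2) α β (L - l) (A + c)
      - μ / ν * EE (M - 2) α β (L - (l + 1)) (A + (c - 1)) := by
    intro α l c
    have := EE_be (β := β) (a := A + c) (by omega) (M - 2) α (L - l)
    rw [z12, sl, sb] at this
    rw [this]; ring
  have r4 : ∀ α : ℤ, EE (M - 2) α (β - 2) (L - 0) (A + 0) = EE (M - 2) α (β - 1) (L - 0) (A + 0)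
      - μ / ν / qq ^ 2 * EE (M - 2) α (β - 1) (L - 1) (A + (-1)) := by
    intro α
    have := EE_be (β := β - 1) (a := A + 0) (by omega) (M - 2) α (L - 0)
    rw [z13, sl, sb, show β - 1 - 1 = β - 2 by ring] at this
    rw [this]; norm_num
  have r5 : ∀ l c : ℤ, EE (M - 2) (α - 1) β (L - l) (A + c) = EE (M - 2) α β (L - l) (A + c)
      - μ * ν * EE (M - 2) α β (L - (l + 1)) (A + (c + 1)) := by
    intro l c
    have := EE_al (α := α) (by omega) (M - 2) β (L - l) (A + c)
    rw [z9, sl, sa] at this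
    rw [this]; ring
  have r6 : ∀ l c : ℤ, EE (M - 2) (α - 2) β (L - l) (A + c) = EE (M - 2) (α - 1) β (L - l) (A + c)
      - μ * ν / qq ^ 2 * EE (M - 2) (α - 1) β (L - (l + 1)) (A + (c + 1)) := by
    intro l c
    have := EE_al (α := α - 1) (by omega) (M - 2) β (L - l) (A + c)
    rw [z10, sl, sa, show α - 1 - 1 = α - 2 by ring] at this
    rw [this]; ring
  have r7 : ∀ l c : ℤ, EE (M - 2) (α - 3) β (L - l) (A + c) = EE (M - 2) (α - 2) β (L - l) (A + c)
      - μ * ν / qq ^ 4 * EE (M - 2) (α - 2) β (L - (l + 1)) (A + (c + 1)) := by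
    intro l c
    have := EE_al (α := α - 2) (by omega) (M - 2) β (L - l) (A + c)
    rw [z11, sl, sa, show α - 2 - 1 = α - 3 by ring] at this
    rw [this]; ring
  unfold TT
  rw [z1, z2, z3, z4, z5, z6, ← hμ]
  rw [show M - 1 + b = α - 1 by omega, show M - 1 - b = β - 1 by omega,
    show M - 2 + b = α - 2 by omega, show M - 2 - b = β - 2 by omega,
    show M - 1 + (b - 1) = α - 2 by omega, show M - 1 - (b - 1) = β by omega,
    show M - 2 + (b - 1) = α - 3 by omega, show M - 2 - (b - 1) = β - 1 by omega,
    ← hα, ← hβ]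
  have g : ∀ F : ℤ → ℤ → RatFunc ℚ, F L A = F (L - 0) (A + 0) := by intro F; simp
  rw [g (EE M α β), g (EE (M - 1) (α - 1) (β - 1)), g (EE (M - 2) (α - 2) (β - 2)),
    show A - 1 = A + (-1) by ring]
  simp only [r1, r2, r3, r4, r5, r6, r7, Int.reduceAdd, Int.reduceSub, Int.reduceNeg]
  generalize EE (M - 2) α β = P
  clear r1 r2 r3 r4 r5 r6 r7 z1 z2 z3 z4 z5 z6 z7 z8 z9 z10 z11 z12 z13 hμ hν
  field_simp
  ring


/-- right-hand side of the invariance -/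
noncomputable def DD (L M a b : ℤ) : RatFunc ℚ := qq ^ (b ^ 2) * TT L M (a + b) b

/-- summand of the left-hand side of the invariance -/
noncomputable def psi (L a b i : ℤ) : RatFunc ℚ := qq ^ (i ^ 2) * TT (L - i) i a b

/-- left-hand side of the invariance -/
noncomputable def HH (L M a b : ℤ) : RatFunc ℚ := W L M (psi L a b)

theorem DD_B {a b : ℤ} (ha : 0 ≤ a) (hb : 1 ≤ b) (L M : ℤ) :
    qq ^ (-2 * M) * (DD L M a b - DD L (M - 1) a b)
      - qq ^ (2 - 2 * M) * (DD L (M - 1) a b - DD L (M - 2) a b)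
    = ((1 + qq ^ 2) * qq ^ (2 * b - 2)) * (DD (L - 1) M (a + 1) b - DD (L - 1) (M - 1) (a + 1) b)
      - qq ^ (4 * b - 2) * qq ^ (2 * M) * DD (L - 2) M (a + 2) b
      + qq⁻¹ * (DD (L - 1) (M - 1) a (b - 1) - DD (L - 1) (M - 2) a (b - 1))
      + qq ^ (2 * M - 2) * DD (L - 2) (M - 1) a (b - 1) := by
  have hq := qq_ne
  unfold DD
  have z : qq ^ ((b - 1) ^ 2) = qq ^ (b ^ 2) * qq ^ (1 - 2 * b) := by
    rw [← zz_add]; congr 1; ring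
  rw [z, show a + 1 + b = a + b + 1 by ring, show a + 2 + b = a + b + 2 by ring,
    show a + (b - 1) = a + b - 1 by ring]
  rcases lt_trichotomy M b with h | h | h
  · rw [TT_zero, TT_zero, TT_zero, TT_zero, TT_zero, TT_zero, TT_zero, TT_zero, TT_zero] <;>
      first | omega | simp
  · subst h
    have k := DB_top hb (A := a + M) (by omega) L
    rw [TT_zero (M := M - 1) (by omega), TT_zero (M := M - 2) (by omega),
      TT_zero (M := M - 1) (a := a + M + 1) (by omega), TT_zero (M := M - 2) (by omega)]
    obtain ⟨μ, hμ⟩ : ∃ μ, μ = qq ^ (2 * M) := ⟨_, rfl⟩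
    have hμ0 : μ ≠ 0 := by rw [hμ]; exact zpow_ne_zero _ hq
    have z1 : qq ^ (-2 * M) = μ⁻¹ := by rw [hμ, ← zpow_neg]; congr 1; ring
    have z3 : qq ^ (2 * M - 2) = μ / qq ^ 2 := by rw [hμ, zpow_sub₀ hq]; rfl
    have z4 : qq ^ (4 * M - 2) = μ * μ / qq ^ 2 := by
      rw [hμ, ← zz_add, zpow_sub₀ hq, show 4 * M = 2 * M + 2 * M by ring]; rfl
    have z4' : qq ^ (8 * M - 2) = μ * μ * μ * μ / qq ^ 2 := by
      rw [hμ, ← zz_add, ← zz_add, ← zz_add, zpow_sub₀ hq,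
        show 8 * M = 2 * M + 2 * M + 2 * M + 2 * M by ring]; rfl
    have z5 : qq ^ (1 - 2 * M) = qq / μ := by rw [hμ, zpow_sub₀ hq, zpow_one]
    have z7 : qq ^ (2 * M - 1) = μ / qq := by rw [hμ, zpow_sub₀ hq, zpow_one]
    rw [z4, z4', z7] at k
    rw [z1, z3, z4, z5, ← hμ]
    have k2 : TT L M (a + M) M = (1 + qq ^ 2) * (μ * μ / qq ^ 2) * TT (L - 1) M (a + M + 1) M
        - μ * μ * μ * μ / qq ^ 2 * TT (L - 2) M (a + M + 2) M
        + (TT (L - 1) (M - 1) (a + M - 1) (M - 1)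
          + μ / qq * TT (L - 2) (M - 1) (a + M - 1) (M - 1)) := by
      rw [← k]; ring
    rw [k2]
    field_simp
    ring
  · have k := DB_big hb (A := a + b) (by omega) h L
    linear_combination qq ^ (b ^ 2) * k

theorem DD_A {L : ℤ} (hL : 1 ≤ L) (M a : ℤ) :
    qq ^ (-2 * M) * (DD L M a 0 - DD L (M - 1) a 0)
      - qq ^ (2 - 2 * M) * (DD L (M - 1) a 0 - DD L (M - 2) a 0)
    = 1 * ((DD (L - 1) M (a + 1) 0 + DD (L - 1) M (a - 1) 0)
        - (DD (L - 1) (M - 1) (a + 1) 0 + DD (L - 1) (M - 1) (a - 1) 0))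
      - 1 * qq ^ (2 * M) * DD (L - 2) M a 0
      + qq⁻¹ * (DD (L - 1) (M - 1) a 0 - DD (L - 1) (M - 2) a 0)
      + qq ^ (2 * M - 2) * DD (L - 2) (M - 1) a 0 := by
  have hq := qq_ne
  have k1 := TT_A L M a (by omega)
  have k2 := TT_A L (M - 1) a (by omega)
  unfold DD
  simp only [add_zero]
  rw [show (0 : ℤ) ^ 2 = 0 by norm_num, zpow_zero]
  obtain ⟨μ, hμ⟩ : ∃ μ, μ = qq ^ (2 * M) := ⟨_, rfl⟩
  have hμ0 : μ ≠ 0 := by rw [hμ]; exact zpow_ne_zero _ hq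
  have z1 : qq ^ (-2 * M) = μ⁻¹ := by rw [hμ, ← zpow_neg]; congr 1; ring
  have z2 : qq ^ (2 - 2 * M) = qq ^ 2 / μ := by rw [hμ, zpow_sub₀ hq]; rfl
  have z3 : qq ^ (2 * M - 2) = μ / qq ^ 2 := by rw [hμ, zpow_sub₀ hq]; rfl
  have z4 : qq ^ (4 * M) = μ * μ := by
    rw [hμ, ← zz_add, show 4 * M = 2 * M + 2 * M by ring]
  have z5 : qq ^ (4 * (M - 1)) = μ * μ / qq ^ 4 := by
    rw [← z4, mul_sub, zpow_sub₀ hq]; rfl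
  have z6 : qq ^ (2 * (M - 1)) = μ / qq ^ 2 := by
    rw [hμ, mul_sub, zpow_sub₀ hq]; rfl
  have z7 : qq ^ (2 * M - 1) = μ / qq := by rw [hμ, zpow_sub₀ hq, zpow_one]
  have z8 : qq ^ (2 * (M - 1) - 1) = μ / qq ^ 3 := by
    rw [hμ, show 2 * (M - 1) - 1 = 2 * M - 3 by ring, zpow_sub₀ hq]; rfl
  rw [z4, z7, ← hμ] at k1
  rw [z5, z6, z8, show M - 1 - 1 = M - 2 by ring] at k2
  rw [z1, z2, z3, ← hμ]
  have k1' : TT L M a 0 = TT L (M - 1) a 0 + μ / qq * TT (L - 1) (M - 1) a 0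
    + μ * (TT (L - 1) M (a + 1) 0 + TT (L - 1) M (a - 1) 0) - μ * μ * TT (L - 2) M a 0 := by
    rw [← k1]; ring
  have k2' : TT L (M - 1) a 0 = TT L (M - 2) a 0 + μ / qq ^ 3 * TT (L - 1) (M - 2) a 0
    + μ / qq ^ 2 * (TT (L - 1) (M - 1) (a + 1) 0 + TT (L - 1) (M - 1) (a - 1) 0)
    - μ * μ / qq ^ 4 * TT (L - 2) (M - 1) a 0 := by
    rw [← k2]; ring
  rw [k1', k2']
  field_simp
  ring

theorem psi_ne {L a b i : ℤ} (h : psi L a b i ≠ 0) : 0 ≤ i ∧ i ≤ L := by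
  by_contra h2
  apply h
  unfold psi
  rw [TT_zero (by omega), mul_zero]

theorem psi_fs (L a b : ℤ) : Function.HasFiniteSupport (psi L a b) :=
  fs_of 0 L (fun _ h => psi_ne h)

theorem psi_zero {L : ℤ} (h : L < 0) (a b i : ℤ) : psi L a b i = 0 := by
  by_contra h2
  have := psi_ne h2
  omega

theorem HH_B {L : ℤ} (hL : 1 ≤ L) {b : ℤ} (hb : 1 ≤ b) (M a : ℤ) :
    qq ^ (-2 * M) * (HH L M a b - HH L (M - 1) a b)
      - qq ^ (2 - 2 * M) * (HH L (M - 1) a b - HH L (M - 2) a b)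
    = ((1 + qq ^ 2) * qq ^ (2 * b - 2)) * (HH (L - 1) M (a + 1) b - HH (L - 1) (M - 1) (a + 1) b)
      - qq ^ (4 * b - 2) * qq ^ (2 * M) * HH (L - 2) M (a + 2) b
      + qq⁻¹ * (HH (L - 1) (M - 1) a (b - 1) - HH (L - 1) (M - 2) a (b - 1))
      + qq ^ (2 * M - 2) * HH (L - 2) (M - 1) a (b - 1) := by
  unfold HH
  apply W_core hL M _ _ (psi_fs _ _ _) (psi_fs _ _ _) (psi_fs _ _ _) (psi_fs _ _ _)
  · intro h
    exact ⟨psi_zero (by omega) _ _, psi_zero (by omega) _ _⟩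
  · intro i
    unfold psi
    have k := TT_B hb (L - i) i a
    rw [show L - i - 1 = L - 1 - i by ring, show L - i - 2 = L - 2 - i by ring] at k
    rw [show L - 1 - (i - 1) = L - i by ring, show L - 2 - (i - 1) = L - 1 - i by ring]
    have z1 : qq ^ (2 * (i + b) - 2) = qq ^ (2 * b - 2) * qq ^ (2 * i) := by
      rw [← zz_add]; congr 1; ring
    have z2 : qq ^ (4 * (i + b) - 2) = qq ^ (4 * b - 2) * (qq ^ (2 * i) * qq ^ (2 * i)) := by
      rw [← zz_add, ← zz_add]; congr 1; ring
    have z3 : qq * (qq ^ (2 * (i - 1)) * qq ^ ((i - 1) ^ 2)) = qq ^ (i ^ 2) := by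
      nth_rewrite 1 [← zpow_one qq]
      rw [← zz_add, ← zz_add]; congr 1; ring
    have z4 : qq ^ 2 * (qq ^ (2 * (i - 1)) * (qq ^ (2 * (i - 1)) * qq ^ ((i - 1) ^ 2)))
        = qq ^ (i ^ 2) * qq ^ (2 * i - 1) := by
      rw [← zpow_natCast, ← zz_add, ← zz_add, ← zz_add, ← zz_add]; congr 1; push_cast; ring
    rw [z1, z2] at k
    linear_combination qq ^ (i ^ 2) * k - TT (L - i) (i - 1) a (b - 1) * z3
      - TT (L - 1 - i) (i - 1) a (b - 1) * z4

theorem HH_A {L : ℤ} (hL : 1 ≤ L) (M a : ℤ) :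
    qq ^ (-2 * M) * (HH L M a 0 - HH L (M - 1) a 0)
      - qq ^ (2 - 2 * M) * (HH L (M - 1) a 0 - HH L (M - 2) a 0)
    = 1 * ((HH (L - 1) M (a + 1) 0 + HH (L - 1) M (a - 1) 0)
        - (HH (L - 1) (M - 1) (a + 1) 0 + HH (L - 1) (M - 1) (a - 1) 0))
      - 1 * qq ^ (2 * M) * HH (L - 2) M a 0
      + qq⁻¹ * (HH (L - 1) (M - 1) a 0 - HH (L - 1) (M - 2) a 0)
      + qq ^ (2 * M - 2) * HH (L - 2) (M - 1) a 0 := by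
  unfold HH
  rw [← W_add _ _ (psi_fs _ _ _) (psi_fs _ _ _), ← W_add _ _ (psi_fs _ _ _) (psi_fs _ _ _)]
  apply W_core hL M _ _ (fs_add (psi_fs _ _ _) (psi_fs _ _ _)) (psi_fs _ _ _) (psi_fs _ _ _)
    (psi_fs _ _ _)
  · intro h
    exact ⟨psi_zero (by omega) _ _, psi_zero (by omega) _ _⟩
  · intro i
    unfold psi
    have k := TT_A (L - i) i a (by omega)
    rw [show L - i - 1 = L - 1 - i by ring, show L - i - 2 = L - 2 - i by ring] at k
    rw [show L - 1 - (i - 1) = L - i by ring, show L - 2 - (i - 1) = L - 1 - i by ring]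
    have z2 : qq ^ (4 * i) = (qq ^ (2 * i) * qq ^ (2 * i)) := by
      rw [← zz_add]; congr 1; ring
    have z3 : qq * (qq ^ (2 * (i - 1)) * qq ^ ((i - 1) ^ 2)) = qq ^ (i ^ 2) := by
      nth_rewrite 1 [← zpow_one qq]
      rw [← zz_add, ← zz_add]; congr 1; ring
    have z4 : qq ^ 2 * (qq ^ (2 * (i - 1)) * (qq ^ (2 * (i - 1)) * qq ^ ((i - 1) ^ 2)))
        = qq ^ (i ^ 2) * qq ^ (2 * i - 1) := by
      rw [← zpow_natCast, ← zz_add, ← zz_add, ← zz_add, ← zz_add]; congr 1; push_cast; ring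
    rw [z2] at k
    linear_combination qq ^ (i ^ 2) * k - TT (L - i) (i - 1) a 0 * z3
      - TT (L - 1 - i) (i - 1) a 0 * z4

theorem uniq (d : ℤ → RatFunc ℚ) (h0 : ∀ M, M < 0 → d M = 0)
    (h : ∀ M, qq ^ (-2 * M) * (d M - d (M - 1)) - qq ^ (2 - 2 * M) * (d (M - 1) - d (M - 2)) = 0)
    (M : ℤ) : d M = 0 := by
  have key : ∀ n : ℕ, ∀ M : ℤ, M < n → d M = 0 := by
    intro n
    induction n with
    | zero => intro M hM; exact h0 M (by simpa using hM)
    | succ n ih =>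
      intro M hM
      by_cases h1 : M < n
      · exact ih M h1
      · have := h M
        push_cast at hM
        rw [ih (M - 1) (by omega), ih (M - 2) (by omega)] at this
        simpa [zpow_ne_zero _ qq_ne] using this
  exact key (M.toNat + 1) M (by omega)

theorem TT_00 {M : ℤ} (hM : 0 ≤ M) : TT 0 M 0 0 = 1 := by
  unfold TT EE
  rw [finsum_eq_single _ 0]
  · unfold ee
    simp only [mul_zero, add_zero, sub_zero]
    rw [bb_left hM, bb_self hM]
    simp
  · intro x hx
    by_contra h
    have := ee_ne h
    omega

theorem HH_neg {L M : ℤ} (h : L < 0 ∨ M < 0) (a b : ℤ) : HH L M a b = 0 := by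
  unfold HH W
  apply fsum_zero
  intro i
  by_contra h2
  have h3 := psi_ne (left_ne_zero_of_mul h2)
  have h4 := bb_ne (right_ne_zero_of_mul h2)
  omega

theorem HH_00 {M : ℤ} (hM : 0 ≤ M) (a b : ℤ) : HH 0 M a b = TT 0 0 a b := by
  unfold HH W
  rw [finsum_eq_single _ 0]
  · unfold psi
    rw [bb_left (by omega)]
    simp
  · intro i hi
    by_contra h2
    have h3 := psi_ne (left_ne_zero_of_mul h2)
    omega

theorem inv_base (L : ℤ) (hL : L ≤ 0) (M a b : ℤ) (h : 0 ≤ a ∧ 0 ≤ b ∨ b = 0) :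
    HH L M a b = DD L M a b := by
  by_cases h1 : L < 0 ∨ M < 0
  · rw [HH_neg h1]
    unfold DD
    rw [TT_zero (by omega), mul_zero]
  · obtain rfl : L = 0 := by omega
    rw [HH_00 (by omega)]
    unfold DD
    by_cases h2 : a = 0 ∧ b = 0
    · rw [h2.1, h2.2, add_zero, TT_00 le_rfl, TT_00 (by omega)]
      simp
    · rw [TT_zero (by omega), TT_zero (by omega), mul_zero]

theorem inv_A (n : ℕ) : ∀ L : ℤ, L ≤ n → ∀ M a : ℤ, HH L M a 0 = DD L M a 0 := by
  induction n with
  | zero => intro L hL M a; exact inv_base L (by simpa using hL) M a 0 (by omega)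
  | succ n ih =>
    intro L hL M a
    by_cases h : L ≤ n
    · exact ih L h M a
    push_cast at hL
    rw [← sub_eq_zero]
    refine uniq (fun M => HH L M a 0 - DD L M a 0) ?_ ?_ M
    · intro M hM
      rw [HH_neg (by omega), DD, TT_zero (by omega)]
      simp
    · intro M
      have k1 := HH_A (L := L) (by omega) M a
      have k2 := DD_A (L := L) (by omega) M a
      simp only [ih (L - 1) (by omega), ih (L - 2) (by omega)] at k1
      linear_combination k1 - k2

theorem inv_B (n : ℕ) : ∀ L : ℤ, L ≤ n → ∀ M a b : ℤ, 0 ≤ a → 0 ≤ b →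
    HH L M a b = DD L M a b := by
  induction n with
  | zero => intro L hL M a b ha hb; exact inv_base L (by simpa using hL) M a b (by omega)
  | succ n ih =>
    intro L hL M a b ha hb
    by_cases h : L ≤ n
    · exact ih L h M a b ha hb
    by_cases hb0 : b = 0
    · subst hb0
      exact inv_A (n + 1) L (by exact_mod_cast hL) M a
    push_cast at hL
    rw [← sub_eq_zero]
    refine uniq (fun M => HH L M a b - DD L M a b) ?_ ?_ M
    · intro M hM
      rw [HH_neg (by omega), DD, TT_zero (by omega)]
      simp
    · intro M
      have k1 := HH_B (L := L) (by omega) (b := b) (by omega) M a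
      have k2 := DD_B ha (b := b) (by omega) L M
      rw [ih (L - 1) (by omega) _ (a + 1) b (by omega) hb,
        ih (L - 1) (by omega) _ (a + 1) b (by omega) hb,
        ih (L - 2) (by omega) _ (a + 2) b (by omega) hb,
        ih (L - 1) (by omega) _ a (b - 1) (by omega) (by omega),
        ih (L - 1) (by omega) _ a (b - 1) (by omega) (by omega),
        ih (L - 2) (by omega) _ a (b - 1) (by omega) (by omega)] at k1
      linear_combination k1 - k2

/-- the invariance -/
theorem inv_main (L M a b : ℤ) (h : 0 ≤ a ∧ 0 ≤ b ∨ a ≤ 0 ∧ b ≤ 0) :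
    ∑ᶠ i : ℤ, qq ^ (i ^ 2) * TT (L - i) i a b * bb (L + M - i) L
      = qq ^ (b ^ 2) * TT L M (a + b) b := by
  have key : ∀ a b : ℤ, 0 ≤ a → 0 ≤ b →
    ∑ᶠ i : ℤ, qq ^ (i ^ 2) * TT (L - i) i a b * bb (L + M - i) L
      = qq ^ (b ^ 2) * TT L M (a + b) b :=
    fun a b ha hb => inv_B L.toNat L (by omega) M a b ha hb
  rcases h with h | h
  · exact key a b h.1 h.2
  · have := key (-a) (-b) (by omega) (by omega)
    rw [show -a + -b = -(a + b) by ring, TT_neg, show (-b) ^ 2 = b ^ 2 by ring] at this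
    rw [← this]
    exact finsum_congr (fun i => by rw [TT_neg])


/-! ### The Bailey-type chain -/

/-- summand of `S` -/
noncomputable def sj (k L M j : ℤ) : RatFunc ℚ :=
  qq ^ (k * j ^ 2 + 2 * j) * (TT L M (k * j) j - TT L M (k * j + 2) j)

/-- alternating sums of refined trinomials -/
noncomputable def S (k L M : ℤ) : RatFunc ℚ := ∑ᶠ j : ℤ, sj k L M j

theorem sj_ne {k L M j : ℤ} (h : sj k L M j ≠ 0) : -M ≤ j ∧ j ≤ M ∧ 0 ≤ L ∧ 0 ≤ M := by
  by_contra h2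
  apply h
  unfold sj
  rw [TT_zero (by omega), TT_zero (by omega)]
  simp

theorem S_zero {k L M : ℤ} (h : L < 0 ∨ M < 0) : S k L M = 0 := by
  apply fsum_zero
  intro j
  by_contra h2
  have := sj_ne h2
  omega

theorem S_fin (B k : ℤ) {L M : ℤ} (h : L < 0 ∨ M ≤ B) :
    S k L M = ∑ j ∈ Finset.Icc (-B) B, sj k L M j := by
  apply finsum_eq_sum_of_support_subset
  intro j hj
  have := sj_ne hj
  simp only [Finset.coe_Icc, Set.mem_Icc]
  omega

theorem S_chain {k : ℤ} (hk : 2 ≤ k) (L M : ℤ) :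
    ∑ᶠ m : ℤ, qq ^ ((L - m) ^ 2) * bb (M + m) L * S k m (L - m) = S (k + 1) L M := by
  have e1 : ∑ᶠ m : ℤ, qq ^ ((L - m) ^ 2) * bb (M + m) L * S k m (L - m)
      = ∑ᶠ i : ℤ, qq ^ (i ^ 2) * bb (L + M - i) L * S k (L - i) i := by
    rw [← finsum_comp_equiv (Equiv.subLeft L)]
    apply finsum_congr
    intro m
    simp only [Equiv.subLeft_apply]
    rw [show L - (L - m) = m by ring, show M + (L - m) = L + M - m by ring]
  rw [e1]
  obtain ⟨B, hB⟩ : ∃ B, B = max L M := ⟨_, rfl⟩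
  have e2 : ∀ i, qq ^ (i ^ 2) * bb (L + M - i) L * S k (L - i) i =
      ∑ j ∈ Finset.Icc (-B) B, qq ^ (i ^ 2) * bb (L + M - i) L * sj k (L - i) i j := by
    intro i
    rw [S_fin B k (by omega), Finset.mul_sum]
  rw [finsum_congr e2, finsum_sum_comm, S_fin B (k + 1) (by omega)]
  · apply Finset.sum_congr rfl
    intro j _
    have h1 := inv_main L M (k * j) j (by
      rcases le_total 0 j with h | h
      · left; exact ⟨by positivity, h⟩
      · right; exact ⟨by nlinarith, h⟩)
    have h2 := inv_main L M (k * j + 2) j (by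
      rcases le_or_gt 0 j with h | h
      · left; exact ⟨by positivity, h⟩
      · right; exact ⟨by nlinarith, h.le⟩)
    unfold sj
    have z : qq ^ ((k + 1) * j ^ 2 + 2 * j) = qq ^ (k * j ^ 2 + 2 * j) * qq ^ (j ^ 2) := by
      rw [← zz_add]; congr 1; ring
    rw [z, show (k + 1) * j = k * j + j by ring, show k * j + j + 2 = k * j + 2 + j by ring,
      mul_assoc, mul_sub, ← h1, ← h2, ← finsum_sub_distrib, mul_finsum]
    · apply finsum_congr
      intro i
      ring
    · exact fs_mulr _ (psi_fs L (k * j) j)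
    · exact fs_mulr _ (psi_fs L (k * j + 2) j)
  · intro j _
    apply fs_of 0 L
    intro i hi
    have := sj_ne (right_ne_zero_of_mul hi)
    omega

/-- coefficient in the seed -/
noncomputable def cK (M K j : ℤ) : RatFunc ℚ :=
  qq ^ (2 * j ^ 2 + 2 * j) * (bb (M + K) (M + j) * bb (M + K) (M - j)
    - bb (M + K - 1) (M + j) * bb (M + K + 1) (M - j))

theorem cK_ne {M K j : ℤ} (h : cK M K j ≠ 0) : -M ≤ j ∧ j ≤ M := by
  by_contra h2
  apply h
  unfold cK
  rcases lt_or_ge j (-M) with h1 | h1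
  · rw [bb_zero (k := M + j) (by omega), bb_zero (k := M + j) (by omega)]; simp
  · rw [bb_zero (k := M - j) (by omega), bb_zero (k := M - j) (by omega)]; simp

theorem cK_fs (M K : ℤ) : Function.HasFiniteSupport (cK M K) := fs_of (-M) M (fun _ h => cK_ne h)

theorem cK_sum {M : ℤ} (hM : 0 ≤ M) (K : ℤ) :
    ∑ᶠ j, cK M K j = if M = 0 ∧ K = 0 then 1 else 0 := by
  rcases lt_trichotomy (M + K) 0 with h | h | h
  · rw [if_neg (by omega)]
    apply fsum_zero
    intro j
    unfold cK
    rw [bb_zero (N := M + K) (k := M + j) (by omega),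
      bb_zero (N := M + K - 1) (k := M + j) (by omega)]
    simp
  · rw [finsum_eq_single _ 0]
    · unfold cK
      rw [h, bb_zero (N := 0 - 1) (by omega)]
      split_ifs with h2
      · rw [h2.1]
        simp [bb_left]
      · rw [bb_zero (N := 0) (k := M + 0) (by omega)]
        simp
    · intro j hj
      unfold cK
      rw [h, bb_zero (N := 0 - 1) (by omega)]
      rcases lt_or_gt_of_ne hj with h1 | h1
      · rw [bb_zero (N := 0) (k := M - j) (by omega)]; simp
      · rw [bb_zero (N := 0) (k := M + j) (by omega)]; simp
  · rw [if_neg (by omega)]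
    obtain ⟨g, hg⟩ : ∃ g : ℤ → RatFunc ℚ, g = fun j =>
      qq ^ (2 * (j ^ 2 + K)) * bb (M + K - 1) (M + j - 1) * bb (M + K) (M - j) := ⟨_, rfl⟩
    have gf : Function.HasFiniteSupport g := by
      apply fs_of (1 - M) M
      intro j hj
      rw [hg] at hj
      have h1 := bb_ne (right_ne_zero_of_mul hj)
      have h2 := bb_ne (right_ne_zero_of_mul (left_ne_zero_of_mul hj))
      omega
    have e : ∀ j, cK M K j = g j - g (j - (-1)) := by
      intro j
      rw [hg]
      unfold cK
      rw [bb_pas1 (N := M + K) (k := M + j) (by omega),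
        bb_pas1 (N := M + K + 1) (k := M - j) (by omega)]
      beta_reduce
      rw [show M + K + 1 - 1 = M + K by ring, show M - (j - (-1)) = M - j - 1 by ring,
        show M + (j - (-1)) - 1 = M + j by ring]
      have z1 : qq ^ (2 * j ^ 2 + 2 * j) * qq ^ (2 * (M + K - (M + j))) = qq ^ (2 * (j ^ 2 + K)) := by
        rw [← zz_add]; congr 1; ring
      have z2 : qq ^ (2 * j ^ 2 + 2 * j) * qq ^ (2 * (M + K + 1 - (M - j)))
          = qq ^ (2 * ((j - (-1)) ^ 2 + K)) := by
        rw [← zz_add]; congr 1; ring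
      linear_combination bb (M + K - 1) (M + j - 1) * bb (M + K) (M - j) * z1
        - bb (M + K - 1) (M + j) * bb (M + K) (M - j - 1) * z2
    rw [finsum_congr e, finsum_sub_distrib gf (fs_shift _ gf), fsum_shift g, sub_self]

theorem S_two (L M : ℤ) : S 2 L M = if L = 0 ∧ M = 0 then 1 else 0 := by
  rcases lt_or_ge M 0 with hM | hM
  · rw [S_zero (by omega), if_neg (by omega)]
  obtain ⟨B, hB⟩ : ∃ B, B = |L| + M := ⟨_, rfl⟩
  have ab1 := le_abs_self L
  have ab2 := neg_abs_le L
  have e : ∀ j, sj 2 L M j = ∑ K ∈ Finset.Icc (-B) B,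
      qq ^ ((L - 2 * K) ^ 2) * bb M (L - 2 * K) * cK M K j := by
    intro j
    have e1 : TT L M (2 * j) j = ∑ᶠ K : ℤ, qq ^ ((L - 2 * K) ^ 2) * bb M (L - 2 * K) *
        (bb (M + K) (M + j) * bb (M + K) (M - j)) := by
      unfold TT EE
      rw [← fsum_shift _ (-j)]
      apply finsum_congr
      intro K
      unfold ee
      rw [show L - 2 * (K - -j) + 2 * j = L - 2 * K by ring,
        show M + j + (K - -j) - 2 * j = M + K by ring, show M - j + (K - -j) = M + K by ring]
      ring
    have e2 : TT L M (2 * j + 2) j = ∑ᶠ K : ℤ, qq ^ ((L - 2 * K) ^ 2) * bb M (L - 2 * K) *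
        (bb (M + K - 1) (M + j) * bb (M + K + 1) (M - j)) := by
      unfold TT EE
      rw [← fsum_shift _ (-j - 1)]
      apply finsum_congr
      intro K
      unfold ee
      rw [show L - 2 * (K - (-j - 1)) + (2 * j + 2) = L - 2 * K by ring,
        show M + j + (K - (-j - 1)) - (2 * j + 2) = M + K - 1 by ring,
        show M - j + (K - (-j - 1)) = M + K + 1 by ring]
      ring
    have fF : Function.HasFiniteSupport (fun K => qq ^ ((L - 2 * K) ^ 2) * bb M (L - 2 * K)) := by
      apply fs_of (-B) B
      intro K hK
      have := bb_ne (right_ne_zero_of_mul hK)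
      omega
    unfold sj
    rw [e1, e2, ← finsum_sub_distrib (fs_mulr _ fF) (fs_mulr _ fF), mul_finsum]
    rw [← finsum_eq_sum_of_support_subset]
    · apply finsum_congr
      intro K
      unfold cK
      ring
    · intro K hK
      have := bb_ne (right_ne_zero_of_mul (left_ne_zero_of_mul hK))
      simp only [Finset.coe_Icc, Set.mem_Icc]
      omega
  unfold S
  rw [finsum_congr e, finsum_sum_comm]
  · simp only [← mul_finsum, cK_sum hM]
    rw [Finset.sum_eq_single 0]
    · split_ifs with h1 h2 h2
      · rw [h2.1, h2.2]; simp [bb_left]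
      · rw [bb_zero (by omega)]; simp
      · omega
      · simp
    · intro K _ hK
      rw [if_neg (by omega), mul_zero]
    · intro h
      exfalso
      apply h
      rw [Finset.mem_Icc]
      have := abs_nonneg L
      omega
  · intro K _
    exact fs_mul (fun _ => _) (cK_fs M K)

theorem S_three (L M : ℤ) : S 3 L M = if L = 0 ∧ 0 ≤ M then 1 else 0 := by
  have := S_chain (k := 2) le_rfl L M
  rw [show (2 : ℤ) + 1 = 3 by norm_num] at this
  rw [← this, finsum_eq_single _ 0]
  · rw [S_two]
    by_cases hL : L = 0
    · subst hL
      by_cases h : 0 ≤ M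
      · simp [bb_left h, h]
      · simp [bb_zero (N := M) (k := 0) (by omega), h]
    · simp [hL]
  · intro m hm
    rw [S_two, if_neg (by omega), mul_zero]

theorem S_four (L M : ℤ) : S 4 L M = qq ^ (L ^ 2) * bb M L := by
  have := S_chain (k := 3) (by norm_num) L M
  rw [show (3 : ℤ) + 1 = 4 by norm_num] at this
  rw [← this, finsum_eq_single _ 0]
  · rw [S_three]
    by_cases hL : 0 ≤ L
    · simp [hL]
    · simp [bb_zero (N := M) (k := L) (by omega)]
  · intro m hm
    rw [S_three, if_neg (by omega), mul_zero]


/-! ### q-trinomials -/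

/-- summand of the q-trinomial -/
noncomputable def tk (L A k : ℤ) : RatFunc ℚ := qq ^ (2 * (k * (k + A))) * bb L k * bb (L - k) (k + A)

/-- q-trinomial as a sum over the integers -/
noncomputable def tt (L A : ℤ) : RatFunc ℚ := ∑ᶠ k : ℤ, tk L A k

theorem tk_ne {L A k : ℤ} (h : tk L A k ≠ 0) : 0 ≤ k ∧ k ≤ L ∧ A ≤ L ∧ -A ≤ L := by
  have h1 := bb_ne (right_ne_zero_of_mul h)
  have h2 := bb_ne (right_ne_zero_of_mul (left_ne_zero_of_mul h))
  omega

theorem tk_fs (L A : ℤ) : Function.HasFiniteSupport (tk L A) :=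
  fs_of 0 L (fun k h => by have := tk_ne h; omega)

theorem tt_zero {L A : ℤ} (h : L < 0 ∨ L < A ∨ L < -A) : tt L A = 0 := by
  apply fsum_zero
  intro k
  by_contra h2
  have := tk_ne h2
  omega

theorem bb_multi (L x y : ℤ) : bb L x * bb (L - x) y = bb L y * bb (L - y) x := by
  by_cases h : 0 ≤ x ∧ 0 ≤ y ∧ x + y ≤ L
  · obtain ⟨i, rfl⟩ := Int.eq_ofNat_of_zero_le h.1
    obtain ⟨j, rfl⟩ := Int.eq_ofNat_of_zero_le h.2.1
    obtain ⟨r, rfl⟩ : ∃ r : ℕ, L = i + j + r := ⟨(L - (i + j)).toNat, by omega⟩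
    have e1 := bb_nat i (j + r)
    have e2 := bb_nat j r
    have e3 := bb_nat j (i + r)
    have e4 := bb_nat i r
    push_cast at e1 e3
    rw [show (i : ℤ) + j + r - i = j + r by ring, show (i : ℤ) + j + r - j = i + r by ring, e2, e4,
      show (i : ℤ) + j + r = i + (j + r) by ring, e1, show (i : ℤ) + (j + r) = j + (i + r) by ring,
      e3, show j + (i + r) = i + (j + r) by ring]
    have a1 := qPoch_ne i
    have a2 := qPoch_ne j
    have a3 := qPoch_ne r
    have a4 := qPoch_ne (i + r)
    have a5 := qPoch_ne (j + r)
    field_simp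
  · have l1 : bb L x * bb (L - x) y = 0 := by
      by_contra h2
      have h3 := bb_ne (left_ne_zero_of_mul h2)
      have h4 := bb_ne (right_ne_zero_of_mul h2)
      omega
    have l2 : bb L y * bb (L - y) x = 0 := by
      by_contra h2
      have h3 := bb_ne (left_ne_zero_of_mul h2)
      have h4 := bb_ne (right_ne_zero_of_mul h2)
      omega
    rw [l1, l2]

theorem tt_neg (L A : ℤ) : tt L (-A) = tt L A := by
  unfold tt
  rw [← fsum_shift _ (-A)]
  apply finsum_congr
  intro k
  unfold tk
  rw [show k - -A + -A = k by ring, show k - -A = k + A by ring, mul_assoc, mul_assoc,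
    bb_multi L (k + A) k, mul_comm (k + A) k]

theorem tt_qTri (L : ℕ) (A : ℤ) : qTri (qq ^ 2) L A A = tt L A := by
  unfold tt
  rw [finsum_eq_sum_of_support_subset (s := (Finset.range (L + 1)).map Nat.castEmbedding)]
  · rw [Finset.sum_map]
    unfold qTri tk bb
    apply Finset.sum_congr rfl
    intro k _
    simp only [Nat.castEmbedding_apply]
    rw [zpow_mul qq 2]
    rfl
  · intro k hk
    have := tk_ne hk
    simp only [Finset.coe_map, Set.mem_image, Finset.coe_range, Set.mem_Iio, Nat.castEmbedding_apply]
    exact ⟨k.toNat, by omega, by omega⟩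

theorem fsum4 {f g1 g2 g3 g4 : ℤ → RatFunc ℚ} (c1 c2 c3 c4 : RatFunc ℚ)
    (h1 : Function.HasFiniteSupport g1) (h2 : Function.HasFiniteSupport g2)
    (h3 : Function.HasFiniteSupport g3) (h4 : Function.HasFiniteSupport g4)
    (H : ∀ x, f x = c1 * g1 x + c2 * g2 x + c3 * g3 x + c4 * g4 x) :
    ∑ᶠ x, f x = c1 * ∑ᶠ x, g1 x + c2 * ∑ᶠ x, g2 x + c3 * ∑ᶠ x, g3 x + c4 * ∑ᶠ x, g4 x := by
  have k1 := fs_mul (fun _ => c1) h1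
  have k2 := fs_mul (fun _ => c2) h2
  have k3 := fs_mul (fun _ => c3) h3
  have k4 := fs_mul (fun _ => c4) h4
  rw [mul_finsum, mul_finsum, mul_finsum, mul_finsum, ← finsum_add_distrib k1 k2,
    ← finsum_add_distrib (fs_add k1 k2) k3, ← finsum_add_distrib (fs_add (fs_add k1 k2) k3) k4]
  exact finsum_congr H

theorem tt_A {L : ℤ} (hL : 1 ≤ L) (A : ℤ) :
    tt L A = 1 * tt (L - 1) A + qq ^ (2 * (L + A)) * tt (L - 1) (A + 1)
      + qq ^ (2 * (L - A)) * tt (L - 1) (A - 1)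
      + (qq ^ (2 * (L - 1)) - qq ^ (2 * (2 * L - 2))) * tt (L - 2) A := by
  unfold tt
  rw [← fsum_shift (tk (L - 1) (A + 1)) 1, ← fsum_shift (tk (L - 2) A) 1]
  apply fsum4 _ _ _ _ (tk_fs _ _) (fs_shift _ (tk_fs _ _)) (tk_fs _ _) (fs_shift _ (tk_fs _ _))
  intro k
  unfold tk
  rw [show k - 1 + (A + 1) = k + A by ring, show L - 1 - (k - 1) = L - k by ring,
    show k + (A - 1) = k + A - 1 by ring, show k - 1 + A = k + A - 1 by ring,
    show L - 2 - (k - 1) = L - k - 1 by ring, show L - 1 - k = L - k - 1 by ring]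
  obtain ⟨y, hy⟩ : ∃ y, y = k + A := ⟨_, rfl⟩
  obtain rfl : A = y - k := by omega
  rw [← hy]
  have z1 : qq ^ (2 * (L + (y - k))) * qq ^ (2 * ((k - 1) * y))
      = qq ^ (2 * (k * y)) * qq ^ (2 * (L - k)) := by
    rw [← zz_add, ← zz_add]; congr 1; ring
  have z2 : qq ^ (2 * (L - (y - k))) * qq ^ (2 * (k * (y - 1)))
      = qq ^ (2 * (k * y)) * qq ^ (2 * (L - k - y)) * qq ^ (2 * k) := by
    rw [← zz_add, ← zz_add, ← zz_add]; congr 1; ring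
  have z3 : qq ^ (2 * (L - 1)) * qq ^ (2 * ((k - 1) * (y - 1)))
      = qq ^ (2 * (k * y)) * qq ^ (2 * (L - k - y)) := by
    rw [← zz_add, ← zz_add]; congr 1; ring
  have z4 : qq ^ (2 * (2 * L - 2)) = qq ^ (2 * (L - 1)) * qq ^ (2 * (L - 1)) := by
    rw [← zz_add]; congr 1; ring
  have p1 := bb_pas1 (N := L) (k := k) (by omega)
  have p2 : bb (L - 1) k * bb (L - k) y = bb (L - 1) k *
      (bb (L - k - 1) y + qq ^ (2 * (L - k - y)) * bb (L - k - 1) (y - 1)) := by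
    by_cases h : L = k
    · rw [bb_zero (N := L - 1) (by omega)]; simp
    · rw [bb_pas1 (N := L - k) (by omega)]
  have p3 := bb_abs (L - 1) k
  rw [show L - 1 - 1 = L - 2 by ring] at p3
  rw [z4]
  linear_combination qq ^ (2 * (k * y)) * bb (L - k) y * p1 + qq ^ (2 * (k * y)) * p2
    - bb (L - 1) (k - 1) * bb (L - k) y * z1 - bb (L - 1) k * bb (L - k - 1) (y - 1) * z2
    - (1 - qq ^ (2 * (L - 1))) * bb (L - 2) (k - 1) * bb (L - k - 1) (y - 1) * z3
    + qq ^ (2 * (k * y)) * qq ^ (2 * (L - k - y)) * bb (L - k - 1) (y - 1) * p3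

theorem bb_P1 {L : ℤ} (hL : 2 ≤ L) (x : ℤ) :
    bb L x = (1 + qq ^ 2) * qq ^ (2 * (L - x - 1)) * bb (L - 1) (x - 1)
      - qq ^ (4 * (L - x) - 2) * bb (L - 2) (x - 2) + bb (L - 2) x := by
  have p1 := bb_pas1 (N := L) (k := x) (by omega)
  have p2 := bb_pas1 (N := L - 1) (k := x) (by omega)
  have p3 := bb_pas1 (N := L - 1) (k := x - 1) (by omega)
  rw [show L - 1 - 1 = L - 2 by ring] at p2 p3
  rw [show x - 1 - 1 = x - 2 by ring, show L - 1 - (x - 1) = L - x by ring] at p3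
  rw [show L - 1 - x = L - x - 1 by ring] at p2
  have z1 : qq ^ (4 * (L - x) - 2) = qq ^ (2 * (L - x - 1)) * qq ^ (2 * (L - x)) := by
    rw [← zz_add]; congr 1; ring
  have z2 : qq ^ (2 * (L - x)) = qq ^ 2 * qq ^ (2 * (L - x - 1)) := by
    rw [← zpow_natCast, ← zz_add]; congr 1; push_cast; ring
  rw [z1]
  linear_combination p1 + p2 - qq ^ (2 * (L - x - 1)) * p3 + bb (L - 1) (x - 1) * z2

theorem tt_B2 {L : ℤ} (hL : 2 ≤ L) (A : ℤ) :
    tt L A = ((1 + qq ^ 2) * qq ^ (2 * (A + L - 1))) * tt (L - 1) (A + 1)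
      + (-qq ^ (2 * (2 * A + 2 * L - 1))) * tt (L - 2) (A + 2)
      + 1 * tt (L - 1) (A - 1) + qq ^ (2 * (L - 1)) * tt (L - 2) (A - 1) := by
  obtain ⟨g, hg⟩ : ∃ g : ℤ → RatFunc ℚ, g = fun k =>
      qq ^ (2 * (k * (k + A - 1))) * bb (L - 2) (k - 1) * bb (L - k - 1) (k + A - 1) := ⟨_, rfl⟩
  have gf : Function.HasFiniteSupport g := by
    apply fs_of 1 L
    intro j hj
    rw [hg] at hj
    have h2 := bb_ne (right_ne_zero_of_mul (left_ne_zero_of_mul hj))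
    omega
  have e0 : tt L A = ∑ᶠ k, (tk L A k - (g (k - (-1)) - g k)) := by
    rw [finsum_sub_distrib (tk_fs _ _), finsum_sub_distrib (fs_shift _ gf) gf, fsum_shift g,
      sub_self, sub_zero]
    · rfl
    · have := fs_add (fs_shift (-1) gf) (fs_mul (fun _ => -1) gf)
      refine Set.Finite.subset this ?_
      intro x hx
      simpa [sub_eq_add_neg] using hx
  rw [e0]
  unfold tt
  rw [← fsum_shift (tk (L - 1) (A + 1)) 1, ← fsum_shift (tk (L - 2) (A + 2)) 2]
  apply fsum4 _ _ _ _ (fs_shift _ (tk_fs _ _)) (fs_shift _ (tk_fs _ _)) (tk_fs _ _) (tk_fs _ _)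
  intro k
  rw [hg]
  beta_reduce
  unfold tk
  rw [show k - 1 + (A + 1) = k + A by ring, show L - 1 - (k - 1) = L - k by ring,
    show k + (A - 1) = k + A - 1 by ring, show k - 2 + (A + 2) = k + A by ring,
    show L - 2 - (k - 2) = L - k by ring, show L - 1 - k = L - k - 1 by ring,
    show L - 2 - k = L - k - 2 by ring, show k - -1 + A - 1 = k + A by ring,
    show k - -1 - 1 = k by ring, show L - (k - -1) - 1 = L - k - 2 by ring,
    show k - -1 = k + 1 by ring]
  obtain ⟨y, hy⟩ : ∃ y, y = k + A := ⟨_, rfl⟩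
  obtain rfl : A = y - k := by omega
  rw [← hy]
  have p1 := bb_P1 hL k
  have p2 := bb_pas2 (N := L - 1) (k := k) (by omega)
  rw [show L - 1 - 1 = L - 2 by ring] at p2
  have p3 : bb (L - 2) k * bb (L - k) y = bb (L - 2) k * (bb (L - k - 1) (y - 1) +
      qq ^ (2 * y) * bb (L - k - 2) y +
      qq ^ (2 * y) * qq ^ (2 * (L - k - 1 - y)) * bb (L - k - 2) (y - 1)) := by
    by_cases h : L - k < 2
    · rw [bb_zero (N := L - 2) (by omega)]; simp
    · rw [bb_pas2 (N := L - k) (by omega), bb_pas1 (N := L - k - 1) (k := y) (by omega),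
        show L - k - 1 - 1 = L - k - 2 by ring]
      ring
  have z1 : qq ^ (2 * (y - k + L - 1)) * qq ^ (2 * ((k - 1) * y))
      = qq ^ (2 * (k * y)) * qq ^ (2 * (L - k - 1)) := by
    rw [← zz_add, ← zz_add]; congr 1; ring
  have z2 : qq ^ (2 * (2 * (y - k) + 2 * L - 1)) * qq ^ (2 * ((k - 2) * y))
      = qq ^ (2 * (k * y)) * qq ^ (4 * (L - k) - 2) := by
    rw [← zz_add, ← zz_add]; congr 1; ring
  have z3 : qq ^ (2 * (k * (y - 1))) * qq ^ (2 * k) = qq ^ (2 * (k * y)) := by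
    rw [← zz_add]; congr 1; ring
  have z4 : qq ^ (2 * (L - 1)) * qq ^ (2 * (k * (y - 1)))
      = qq ^ (2 * (k * y)) * (qq ^ (2 * y) * qq ^ (2 * (L - k - 1 - y))) := by
    rw [← zz_add, ← zz_add, ← zz_add]; congr 1; ring
  have z5 : qq ^ (2 * ((k + 1) * y)) = qq ^ (2 * (k * y)) * qq ^ (2 * y) := by
    rw [← zz_add]; congr 1; ring
  rw [z5]
  linear_combination qq ^ (2 * (k * y)) * bb (L - k) y * p1 + qq ^ (2 * (k * y)) * p3
    - qq ^ (2 * (k * (y - 1))) * bb (L - k - 1) (y - 1) * p2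
    - (1 + qq ^ 2) * bb (L - 1) (k - 1) * bb (L - k) y * z1
    + bb (L - 2) (k - 2) * bb (L - k) y * z2
    - bb (L - 2) k * bb (L - k - 1) (y - 1) * z3
    - bb (L - 2) k * bb (L - k - 2) (y - 1) * z4

theorem tt_00 : tt 0 0 = 1 := by
  unfold tt
  rw [finsum_eq_single _ 0]
  · simp [tk, bb_left]
  · intro k hk
    by_contra h
    have := tk_ne h
    omega

theorem tt_11 : tt 1 1 = 1 := by
  unfold tt
  rw [finsum_eq_single _ 0]
  · simp [tk, bb_left, bb_self]
  · intro k hk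
    by_contra h
    have := tk_ne h
    obtain rfl : k = 1 := by omega
    apply h
    unfold tk
    rw [bb_zero (N := 1 - 1) (by omega), mul_zero]

theorem tt_B {L A : ℤ} (hL : 0 ≤ L) (hA : 1 ≤ A) :
    tt L A = ((1 + qq ^ 2) * qq ^ (2 * (A + L - 1))) * tt (L - 1) (A + 1)
      + (-qq ^ (2 * (2 * A + 2 * L - 1))) * tt (L - 2) (A + 2)
      + 1 * tt (L - 1) (A - 1) + qq ^ (2 * (L - 1)) * tt (L - 2) (A - 1) := by
  by_cases h : 2 ≤ L
  · exact tt_B2 h A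
  · rw [tt_zero (L := L - 1) (A := A + 1) (by omega), tt_zero (L := L - 2) (by omega),
      tt_zero (L := L - 2) (by omega)]
    by_cases h1 : L = 1 ∧ A = 1
    · rw [h1.1, h1.2, tt_11]
      simp [tt_00]
    · rw [tt_zero (by omega), tt_zero (by omega)]
      simp


/-! ### The final step -/

/-- summand of `Q` -/
noncomputable def chi (L a b i : ℤ) : RatFunc ℚ := qq ^ ((L - i) ^ 2) * TT (L - i) i a b

/-- sum over refined trinomials giving ordinary trinomials -/
noncomputable def Q (L a b : ℤ) : RatFunc ℚ := ∑ᶠ i : ℤ, chi L a b i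

theorem chi_ne {L a b i : ℤ} (h : chi L a b i ≠ 0) : 0 ≤ i ∧ i ≤ L := by
  by_contra h2
  apply h
  unfold chi
  rw [TT_zero (by omega), mul_zero]

theorem chi_fs (L a b : ℤ) : Function.HasFiniteSupport (chi L a b) :=
  fs_of 0 L (fun _ h => chi_ne h)

theorem Q_zero {L : ℤ} (h : L < 0) (a b : ℤ) : Q L a b = 0 := by
  apply fsum_zero
  intro i
  by_contra h2
  have := chi_ne h2
  omega

theorem Q_B {b : ℤ} (hb : 1 ≤ b) (L a : ℤ) :
    Q L a b = ((1 + qq ^ 2) * qq ^ (2 * b + 2 * L - 3)) * Q (L - 1) (a + 1) b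
      + (-qq ^ (4 * b + 4 * L - 6)) * Q (L - 2) (a + 2) b
      + 1 * Q (L - 1) a (b - 1) + qq ^ (2 * L - 2) * Q (L - 2) a (b - 1) := by
  unfold Q
  rw [← fsum_shift (chi (L - 1) a (b - 1)) 1, ← fsum_shift (chi (L - 2) a (b - 1)) 1]
  apply fsum4 _ _ _ _ (chi_fs _ _ _) (chi_fs _ _ _) (fs_shift _ (chi_fs _ _ _))
    (fs_shift _ (chi_fs _ _ _))
  intro i
  unfold chi
  have k := TT_B hb (L - i) i a
  rw [show L - i - 1 = L - 1 - i by ring, show L - i - 2 = L - 2 - i by ring] at k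
  rw [show L - 1 - (i - 1) = L - i by ring, show L - 2 - (i - 1) = L - 1 - i by ring]
  have z1 : qq ^ ((L - i) ^ 2) * qq ^ (2 * (i + b) - 2)
      = qq ^ (2 * b + 2 * L - 3) * qq ^ ((L - 1 - i) ^ 2) := by
    rw [← zz_add, ← zz_add]; congr 1; ring
  have z2 : qq ^ ((L - i) ^ 2) * qq ^ (4 * (i + b) - 2)
      = qq ^ (4 * b + 4 * L - 6) * qq ^ ((L - 2 - i) ^ 2) := by
    rw [← zz_add, ← zz_add]; congr 1; ring
  have z3 : qq ^ ((L - i) ^ 2) * qq ^ (2 * i - 1)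
      = qq ^ (2 * L - 2) * qq ^ ((L - 1 - i) ^ 2) := by
    rw [← zz_add, ← zz_add]; congr 1; ring
  linear_combination qq ^ ((L - i) ^ 2) * k + (1 + qq ^ 2) * TT (L - 1 - i) i (a + 1) b * z1
    - TT (L - 2 - i) i (a + 2) b * z2 + TT (L - 1 - i) (i - 1) a (b - 1) * z3

theorem Q_A {L : ℤ} (hL : 1 ≤ L) (a : ℤ) :
    Q L a 0 = qq ^ (2 * L - 1) * (Q (L - 1) (a + 1) 0 + Q (L - 1) (a - 1) 0)
      + (-qq ^ (4 * L - 4)) * Q (L - 2) a 0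
      + 1 * Q (L - 1) a 0 + qq ^ (2 * L - 2) * Q (L - 2) a 0 := by
  unfold Q
  rw [← finsum_add_distrib (chi_fs _ _ _) (chi_fs _ _ _)]
  nth_rewrite 2 [← fsum_shift (chi (L - 2) a 0) 1]
  rw [← fsum_shift (chi (L - 1) a 0) 1]
  apply fsum4 _ _ _ _ (fs_add (chi_fs _ _ _) (chi_fs _ _ _)) (chi_fs _ _ _)
    (fs_shift _ (chi_fs _ _ _)) (fs_shift _ (chi_fs _ _ _))
  intro i
  unfold chi
  have k := TT_A (L - i) i a (by omega)
  rw [show L - i - 1 = L - 1 - i by ring, show L - i - 2 = L - 2 - i by ring] at k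
  rw [show L - 1 - (i - 1) = L - i by ring, show L - 2 - (i - 1) = L - 1 - i by ring]
  have z1 : qq ^ ((L - i) ^ 2) * qq ^ (2 * i)
      = qq ^ (2 * L - 1) * qq ^ ((L - 1 - i) ^ 2) := by
    rw [← zz_add, ← zz_add]; congr 1; ring
  have z2 : qq ^ ((L - i) ^ 2) * qq ^ (4 * i)
      = qq ^ (4 * L - 4) * qq ^ ((L - 2 - i) ^ 2) := by
    rw [← zz_add, ← zz_add]; congr 1; ring
  have z3 : qq ^ ((L - i) ^ 2) * qq ^ (2 * i - 1)
      = qq ^ (2 * L - 2) * qq ^ ((L - 1 - i) ^ 2) := by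
    rw [← zz_add, ← zz_add]; congr 1; ring
  linear_combination qq ^ ((L - i) ^ 2) * k
    + (TT (L - 1 - i) i (a + 1) 0 + TT (L - 1 - i) i (a - 1) 0) * z1
    - TT (L - 2 - i) i a 0 * z2 + TT (L - 1 - i) (i - 1) a 0 * z3

theorem Q_00 (a b : ℤ) : Q 0 a b = TT 0 0 a b := by
  unfold Q
  rw [finsum_eq_single _ 0]
  · simp [chi]
  · intro i hi
    by_contra h
    have := chi_ne h
    omega

theorem Q_t0 (n : ℕ) : ∀ L : ℤ, L ≤ n → ∀ a : ℤ, Q L a 0 = qq ^ (a ^ 2) * tt L a := by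
  induction n with
  | zero =>
    intro L hL a
    by_cases h : L < 0
    · rw [Q_zero h, tt_zero (by omega), mul_zero]
    · obtain rfl : L = 0 := by push_cast at hL; omega
      rw [Q_00]
      by_cases ha : a = 0
      · rw [ha, TT_00 le_rfl, tt_00]; simp
      · rw [TT_zero (by omega), tt_zero (by omega), mul_zero]
  | succ n ih =>
    intro L hL a
    by_cases h : L ≤ n
    · exact ih L h a
    push_cast at hL
    rw [Q_A (by omega), tt_A (by omega)]
    simp only [ih (L - 1) (by omega), ih (L - 2) (by omega)]
    have z1 : qq ^ (2 * L - 1) * qq ^ ((a + 1) ^ 2) = qq ^ (a ^ 2) * qq ^ (2 * (L + a)) := by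
      rw [← zz_add, ← zz_add]; congr 1; ring
    have z2 : qq ^ (2 * L - 1) * qq ^ ((a - 1) ^ 2) = qq ^ (a ^ 2) * qq ^ (2 * (L - a)) := by
      rw [← zz_add, ← zz_add]; congr 1; ring
    rw [show 2 * (L - 1) = 2 * L - 2 by ring, show 2 * (2 * L - 2) = 4 * L - 4 by ring]
    linear_combination tt (L - 1) (a + 1) * z1 + tt (L - 1) (a - 1) * z2

theorem Q_t (n : ℕ) : ∀ L : ℤ, L < n → ∀ a b : ℤ, 0 ≤ a → 0 ≤ b →
    Q L a b = qq ^ (a ^ 2) * tt L (a + b) := by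
  induction n with
  | zero =>
    intro L hL a b _ _
    rw [Q_zero (by simpa using hL), tt_zero (by left; simpa using hL), mul_zero]
  | succ n ih =>
    intro L hL a b ha hb
    by_cases h : L < n
    · exact ih L h a b ha hb
    by_cases hb0 : b = 0
    · subst hb0
      rw [add_zero]
      exact Q_t0 (n + 1) L hL.le a
    push_cast at hL
    rw [Q_B (by omega), tt_B (by omega) (by omega),
      ih (L - 1) (by omega) (a + 1) b (by omega) hb,
      ih (L - 2) (by omega) (a + 2) b (by omega) hb,
      ih (L - 1) (by omega) a (b - 1) (by omega) (by omega),
      ih (L - 2) (by omega) a (b - 1) (by omega) (by omega)]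
    have z1 : qq ^ (2 * b + 2 * L - 3) * qq ^ ((a + 1) ^ 2)
        = qq ^ (a ^ 2) * qq ^ (2 * (a + b + L - 1)) := by
      rw [← zz_add, ← zz_add]; congr 1; ring
    have z2 : qq ^ (4 * b + 4 * L - 6) * qq ^ ((a + 2) ^ 2)
        = qq ^ (a ^ 2) * qq ^ (2 * (2 * (a + b) + 2 * L - 1)) := by
      rw [← zz_add, ← zz_add]; congr 1; ring
    rw [show a + 1 + b = a + b + 1 by ring, show a + 2 + b = a + b + 2 by ring,
      show a + (b - 1) = a + b - 1 by ring, show 2 * (L - 1) = 2 * L - 2 by ring]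
    linear_combination (1 + qq ^ 2) * tt (L - 1) (a + b + 1) * z1 - tt (L - 2) (a + b + 2) * z2

theorem Q_main (L a b : ℤ) (h : 0 ≤ a ∧ 0 ≤ b ∨ a ≤ 0 ∧ b ≤ 0) :
    Q L a b = qq ^ (a ^ 2) * tt L (a + b) := by
  have key : ∀ a b : ℤ, 0 ≤ a → 0 ≤ b → Q L a b = qq ^ (a ^ 2) * tt L (a + b) :=
    fun a b ha hb => Q_t (L.toNat + 1) L (by omega) a b ha hb
  rcases h with h | h
  · exact key a b h.1 h.2
  · have := key (-a) (-b) (by omega) (by omega)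
    rw [show -a + -b = -(a + b) by ring, tt_neg, show (-a) ^ 2 = a ^ 2 by ring] at this
    rw [← this]
    unfold Q
    exact finsum_congr (fun i => by unfold chi; rw [TT_neg])

theorem S_final {k : ℤ} (hk : 2 ≤ k) (L : ℤ) :
    ∑ᶠ m : ℤ, qq ^ (m ^ 2) * S k m (L - m) = ∑ j ∈ Finset.Icc (-L) L,
      (qq ^ (j * (k * (k + 1) * j + 2)) * tt L ((k + 1) * j)
        - qq ^ ((k * j + 2) * ((k + 1) * j + 2)) * tt L ((k + 1) * j + 2)) := by
  have e1 : ∑ᶠ m : ℤ, qq ^ (m ^ 2) * S k m (L - m)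
      = ∑ᶠ i : ℤ, qq ^ ((L - i) ^ 2) * S k (L - i) i := by
    rw [← finsum_comp_equiv (Equiv.subLeft L)]
    apply finsum_congr
    intro m
    simp only [Equiv.subLeft_apply]
    rw [show L - (L - m) = m by ring]
  rw [e1]
  have e2 : ∀ i, qq ^ ((L - i) ^ 2) * S k (L - i) i =
      ∑ j ∈ Finset.Icc (-L) L, qq ^ ((L - i) ^ 2) * sj k (L - i) i j := by
    intro i
    rw [S_fin L k (by omega), Finset.mul_sum]
  rw [finsum_congr e2, finsum_sum_comm]
  · apply Finset.sum_congr rfl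
    intro j _
    have h1 := Q_main L (k * j) j (by
      rcases le_total 0 j with h | h
      · left; exact ⟨by positivity, h⟩
      · right; exact ⟨by nlinarith, h⟩)
    have h2 := Q_main L (k * j + 2) j (by
      rcases le_or_gt 0 j with h | h
      · left; exact ⟨by positivity, h⟩
      · right; exact ⟨by nlinarith, h.le⟩)
    have z1 : qq ^ (j * (k * (k + 1) * j + 2)) = qq ^ (k * j ^ 2 + 2 * j) * qq ^ ((k * j) ^ 2) := by
      rw [← zz_add]; congr 1; ring
    have z2 : qq ^ ((k * j + 2) * ((k + 1) * j + 2))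
        = qq ^ (k * j ^ 2 + 2 * j) * qq ^ ((k * j + 2) ^ 2) := by
      rw [← zz_add]; congr 1; ring
    rw [z1, z2, show (k + 1) * j = k * j + j by ring, show k * j + j + 2 = k * j + 2 + j by ring,
      mul_assoc, mul_assoc, ← mul_sub, ← h1, ← h2]
    unfold Q
    rw [← finsum_sub_distrib (chi_fs _ _ _) (chi_fs _ _ _), mul_finsum]
    apply finsum_congr
    intro i
    unfold sj chi
    ring
  · intro j _
    apply fs_of 0 L
    intro i hi
    have := sj_ne (right_ne_zero_of_mul hi)
    omega


/-! ### The fermionic side -/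

/-- quadratic form -/
def cE (n : ℕ) (m : Fin n → ℕ) : ℤ := ∑ i : Fin n, ∑ j : Fin n, (m i : ℤ) * cartanA n i j * (m j : ℤ)

/-- product of binomials -/
noncomputable def cP (n : ℕ) (L : ℤ) (m : Fin n → ℕ) : RatFunc ℚ :=
  ∏ j : Fin n, qBin (qq ^ 2) (L * (if (j : ℕ) = 0 then 1 else 0) + (m j : ℤ) -
    ∑ k : Fin n, cartanA n j k * (m k : ℤ)) (m j : ℤ)

/-- first entry -/
def cH (n : ℕ) (m : Fin n → ℕ) : ℤ := ∑ i : Fin n, (if (i : ℕ) = 0 then 1 else 0) * (m i : ℤ)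

theorem cH_cons (n x : ℕ) (m : Fin n → ℕ) : cH (n + 1) (Fin.cons x m) = x := by
  unfold cH
  rw [Fin.sum_univ_succ]
  simp

theorem cartan_ss (n : ℕ) (i j : Fin n) : cartanA (n + 1) i.succ j.succ = cartanA n i j := by
  unfold cartanA
  simp

theorem cartan_00 (n : ℕ) : cartanA (n + 1) 0 0 = 2 := by
  unfold cartanA
  simp

theorem cartan_0s (n : ℕ) (j : Fin n) :
    cartanA (n + 1) 0 j.succ = -(if (j : ℕ) = 0 then 1 else 0) := by
  unfold cartanA
  rw [if_neg (Fin.succ_ne_zero j).symm]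
  by_cases h : (j : ℕ) = 0
  · simp [h]
  · rw [if_neg, if_neg h]
    · simp
    · simp only [Fin.val_zero, Fin.val_succ]
      push_cast
      intro h2
      rw [zero_sub, abs_neg, abs_of_nonneg (by positivity)] at h2
      omega

theorem cartan_s0 (n : ℕ) (j : Fin n) :
    cartanA (n + 1) j.succ 0 = -(if (j : ℕ) = 0 then 1 else 0) := by
  rw [← cartan_0s]
  unfold cartanA
  rw [if_neg (Fin.succ_ne_zero j).symm, if_neg (Fin.succ_ne_zero j), abs_sub_comm]

theorem row_zero (n x : ℕ) (m : Fin n → ℕ) :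
    ∑ k : Fin (n + 1), cartanA (n + 1) 0 k * ((Fin.cons x m : Fin (n + 1) → ℕ) k : ℤ)
      = 2 * x - cH n m := by
  rw [Fin.sum_univ_succ, cartan_00]
  simp only [Fin.cons_zero, Fin.cons_succ, cartan_0s]
  unfold cH
  rw [sub_eq_add_neg, ← Finset.sum_neg_distrib]
  congr 1
  exact Finset.sum_congr rfl (fun i _ => by ring)

theorem row_succ (n x : ℕ) (m : Fin n → ℕ) (j : Fin n) :
    ∑ k : Fin (n + 1), cartanA (n + 1) j.succ k * ((Fin.cons x m : Fin (n + 1) → ℕ) k : ℤ)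
      = -(if (j : ℕ) = 0 then 1 else 0) * x + ∑ k : Fin n, cartanA n j k * (m k : ℤ) := by
  rw [Fin.sum_univ_succ, cartan_s0]
  simp only [Fin.cons_zero, Fin.cons_succ, cartan_ss]

theorem cE_eq (n : ℕ) (m : Fin n → ℕ) :
    cE n m = ∑ i : Fin n, (m i : ℤ) * ∑ j : Fin n, cartanA n i j * (m j : ℤ) := by
  unfold cE
  apply Finset.sum_congr rfl
  intro i _
  rw [Finset.mul_sum]
  exact Finset.sum_congr rfl (fun j _ => by ring)

theorem cE_cons (n x : ℕ) (m : Fin n → ℕ) :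
    cE (n + 1) (Fin.cons x m) = 2 * (x : ℤ) ^ 2 - 2 * x * cH n m + cE n m := by
  rw [cE_eq, Fin.sum_univ_succ, row_zero]
  simp only [row_succ, Fin.cons_zero, Fin.cons_succ, mul_add, Finset.sum_add_distrib]
  rw [← cE_eq]
  have : ∑ i : Fin n, (m i : ℤ) * (-(if (i : ℕ) = 0 then 1 else 0) * (x : ℤ)) = -(x * cH n m) := by
    unfold cH
    rw [Finset.mul_sum, ← Finset.sum_neg_distrib]
    exact Finset.sum_congr rfl (fun i _ => by ring)
  rw [this]
  ring

theorem cP_cons (n : ℕ) (L : ℤ) (x : ℕ) (m : Fin n → ℕ) :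
    cP (n + 1) L (Fin.cons x m) = bb (L - x + cH n m) x * cP n x m := by
  unfold cP
  rw [Fin.prod_univ_succ, row_zero]
  congr 1
  · unfold bb
    simp only [Fin.cons_zero, Fin.val_zero, if_true]
    congr 1
    ring
  · apply Finset.prod_congr rfl
    intro j _
    rw [row_succ]
    simp only [Fin.cons_succ, Fin.val_succ]
    congr 1
    rw [if_neg (by omega)]
    ring

theorem pi_sum (n : ℕ) (R : Finset ℕ) (f : (Fin (n + 1) → ℕ) → RatFunc ℚ) :
    ∑ m ∈ Fintype.piFinset (fun _ : Fin (n + 1) => R), f m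
      = ∑ x ∈ R, ∑ m ∈ Fintype.piFinset (fun _ : Fin n => R), f (Fin.cons x m) := by
  rw [← Finset.sum_product']
  refine Finset.sum_nbij' (fun m => (m 0, Fin.tail m)) (fun p => Fin.cons p.1 p.2) ?_ ?_ ?_ ?_ ?_
  · intro m hm
    rw [Fintype.mem_piFinset] at hm
    rw [Finset.mem_product, Fintype.mem_piFinset]
    exact ⟨hm 0, fun i => hm i.succ⟩
  · intro p hp
    rw [Finset.mem_product, Fintype.mem_piFinset] at hp
    rw [Fintype.mem_piFinset]
    intro i
    refine Fin.cases ?_ ?_ i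
    · simpa using hp.1
    · intro j; simpa using hp.2 j
  · intro m _
    simp
  · intro p _
    simp
  · intro m _
    simp

/-- fermionic sums -/
noncomputable def U (N n : ℕ) (L M : ℤ) : RatFunc ℚ :=
  ∑ m ∈ Fintype.piFinset (fun _ : Fin n => Finset.range (N + 1)),
    qq ^ (L ^ 2 - 2 * L * cH n m + cE n m) * bb (M + cH n m) L * cP n L m

theorem U_succ (N n : ℕ) (L M : ℤ) :
    U N (n + 1) L M = ∑ x ∈ Finset.range (N + 1),
      qq ^ ((L - x) ^ 2) * bb (M + x) L * U N n x (L - x) := by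
  unfold U
  rw [pi_sum]
  apply Finset.sum_congr rfl
  intro x _
  rw [Finset.mul_sum]
  apply Finset.sum_congr rfl
  intro m _
  rw [cH_cons, cE_cons, cP_cons]
  have z : qq ^ (L ^ 2 - 2 * L * x + (2 * (x : ℤ) ^ 2 - 2 * x * cH n m + cE n m))
      = qq ^ ((L - x) ^ 2) * qq ^ ((x : ℤ) ^ 2 - 2 * x * cH n m + cE n m) := by
    rw [← zz_add]; congr 1; ring
  rw [z]
  ring

theorem range_fsum (N : ℕ) (f : ℤ → RatFunc ℚ) (h : ∀ x, f x ≠ 0 → 0 ≤ x ∧ x ≤ N) :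
    ∑ᶠ x, f x = ∑ x ∈ Finset.range (N + 1), f x := by
  rw [finsum_eq_sum_of_support_subset (s := (Finset.range (N + 1)).map Nat.castEmbedding)]
  · rw [Finset.sum_map]
    rfl
  · intro k hk
    have := h k hk
    simp only [Finset.coe_map, Set.mem_image, Finset.coe_range, Set.mem_Iio, Nat.castEmbedding_apply]
    exact ⟨k.toNat, by omega, by omega⟩

theorem S_ne {k L M : ℤ} (h : S k L M ≠ 0) : 0 ≤ L ∧ 0 ≤ M := by
  by_contra h2
  exact h (S_zero (by omega))

theorem U_eq (N n : ℕ) : ∀ L M : ℤ, L ≤ N → U N n L M = S (n + 4) L M := by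
  induction n with
  | zero =>
    intro L M _
    rw [show ((0 : ℕ) : ℤ) + 4 = 4 by norm_num, S_four]
    unfold U
    simp [cH, cE, cP]
  | succ n ih =>
    intro L M hL
    rw [U_succ, show ((n + 1 : ℕ) : ℤ) + 4 = (n + 4) + 1 by push_cast; ring,
      ← S_chain (by omega), range_fsum N]
    · apply Finset.sum_congr rfl
      intro x hx
      rw [Finset.mem_range] at hx
      rw [ih x (L - x) (by omega)]
    · intro x hx
      have := S_ne (right_ne_zero_of_mul hx)
      omega

theorem lhs_eq (L n : ℕ) :
    ∑ m ∈ Fintype.piFinset (fun _ : Fin (n + 1) => Finset.range (L + 1)),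
      qq ^ cE (n + 1) m * cP (n + 1) L m = ∑ᶠ m : ℤ, qq ^ (m ^ 2) * S (n + 4) m (L - m) := by
  rw [pi_sum, range_fsum L]
  · apply Finset.sum_congr rfl
    intro x hx
    rw [Finset.mem_range] at hx
    rw [← U_eq L n x (L - x) (by omega)]
    unfold U
    rw [Finset.mul_sum]
    apply Finset.sum_congr rfl
    intro m _
    rw [cE_cons, cP_cons]
    have z : qq ^ (2 * (x : ℤ) ^ 2 - 2 * x * cH n m + cE n m)
      = qq ^ ((x : ℤ) ^ 2) * qq ^ ((x : ℤ) ^ 2 - 2 * x * cH n m + cE n m) := by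
      rw [← zz_add]; congr 1; ring
    rw [z]
    ring
  · intro x hx
    have := S_ne (right_ne_zero_of_mul hx)
    omega


theorem stmt19 (L n : ℕ) (hn : 1 ≤ n) :
    ∑ m ∈ Fintype.piFinset (fun _ : Fin n => Finset.range (L + 1)),
        qq ^ (∑ i : Fin n, ∑ j : Fin n, (m i : ℤ) * cartanA n i j * (m j : ℤ)) *
          ∏ j : Fin n,
            qBin (qq ^ 2)
              ((L : ℤ) * (if (j : ℕ) = 0 then 1 else 0) + (m j : ℤ) -
                ∑ k : Fin n, cartanA n j k * (m k : ℤ))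
              (m j : ℤ) =
      ∑ j ∈ Finset.Icc (-(L : ℤ)) (L : ℤ),
        (qq ^ (j * (((n : ℤ) + 3) * ((n : ℤ) + 4) * j + 2)) *
            qTri (qq ^ 2) L (((n : ℤ) + 4) * j) (((n : ℤ) + 4) * j) -
          qq ^ ((((n : ℤ) + 3) * j + 2) * (((n : ℤ) + 4) * j + 2)) *
            qTri (qq ^ 2) L (((n : ℤ) + 4) * j + 2) (((n : ℤ) + 4) * j + 2)) := by

  obtain ⟨n, rfl⟩ : ∃ n' : ℕ, n = n' + 1 := ⟨n - 1, by omega⟩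
  have h := lhs_eq L n
  rw [S_final (by omega)] at h
  refine h.trans ?_
  apply Finset.sum_congr rfl
  intro j _
  rw [tt_qTri, tt_qTri]
  rw [show ((n + 1 : ℕ) : ℤ) + 3 = n + 4 by push_cast; ring,
    show ((n + 1 : ℕ) : ℤ) + 4 = n + 4 + 1 by push_cast; ring]
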